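/- Let X be a K-convex complex Banach space and p ∈ (1,∞). Then there exist c, C ∈ (0,∞) and η ∈ (1/2, 1] such that for every n,d ∈ ℕ with 1 ≤ d ≤ n, every function f : {-1,1}^n → X of degree at most d satisfies, for all t ≥ 0, ‖e^{-tΔ} f‖_{L_p({-1,1}^n;X)} ≥ c e^{-C·d·max{t, t^η}} · ‖f‖_{L_p({-1,1}^n;X)}. -/

import Mathlib

open scoped BigOperators ENNReal NNReal

noncomputable section

namespace HammingCube

variable {X : Type*} [NormedAddCommGroup X] [NormedSpace ℂ X]

/-- The sign ±1 associated to a boolean coordinate. -/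
def sgn (b : Bool) : ℝ := if b then 1 else -1

/-- The Walsh function `w_A(ε) = ∏_{i ∈ A} ε_i`. -/
def walsh {n : ℕ} (A : Finset (Fin n)) (ε : Fin n → Bool) : ℝ := ∏ i ∈ A, sgn (ε i)

/-- The Fourier–Walsh coefficient `f̂(A) = 2⁻ⁿ ∑_δ f(δ) w_A(δ)`. -/
def coeff {n : ℕ} (f : (Fin n → Bool) → X) (A : Finset (Fin n)) : X :=
  (2 ^ n : ℝ)⁻¹ • ∑ δ : Fin n → Bool, walsh A δ • f δ

/-- `f` has degree at most `d`: `f̂(A) = 0` whenever `|A| > d`. -/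
def degLE {n : ℕ} (f : (Fin n → Bool) → X) (d : ℕ) : Prop :=
  ∀ A : Finset (Fin n), d < A.card → coeff f A = 0

/-- `f` belongs to the `d`-th tail space: `f̂(A) = 0` whenever `|A| < d`. -/
def tailSpace {n : ℕ} (f : (Fin n → Bool) → X) (d : ℕ) : Prop :=
  ∀ A : Finset (Fin n), A.card < d → coeff f A = 0

/-- The heat semigroup `e^{-tΔ} f = ∑_A e^{-t|A|} f̂(A) w_A`. -/
def heat {n : ℕ} (t : ℝ) (f : (Fin n → Bool) → X) : (Fin n → Bool) → X :=
  fun ε => ∑ A : Finset (Fin n), Real.exp (-t * A.card) • walsh A ε • coeff f A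

/-- The hypercube Laplacian `Δ f = ∑_A |A| f̂(A) w_A`. -/
def lap {n : ℕ} (f : (Fin n → Bool) → X) : (Fin n → Bool) → X :=
  fun ε => ∑ A : Finset (Fin n), (A.card : ℝ) • walsh A ε • coeff f A

/-- The fractional Laplacian `Δ^γ f = ∑_A |A|^γ f̂(A) w_A`. -/
def fracLap {n : ℕ} (γ : ℝ) (f : (Fin n → Bool) → X) : (Fin n → Bool) → X :=
  fun ε => ∑ A : Finset (Fin n), ((A.card : ℝ) ^ γ) • walsh A ε • coeff f A

/-- The `i`-th discrete partial derivative. -/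
def pderiv {n : ℕ} (i : Fin n) (f : (Fin n → Bool) → X) : (Fin n → Bool) → X :=
  fun ε => (2 : ℝ)⁻¹ • (f ε - f (Function.update ε i (!(ε i))))

/-- The vector-valued `L_p` norm `(2⁻ⁿ ∑_ε ‖f(ε)‖^p)^{1/p}` for finite `p`. -/
def lpNorm {n : ℕ} {Y : Type*} [NormedAddCommGroup Y] (p : ℝ)
    (f : (Fin n → Bool) → Y) : ℝ :=
  ((2 ^ n : ℝ)⁻¹ * ∑ ε : Fin n → Bool, ‖f ε‖ ^ p) ^ (1 / p)

/-- The `L_∞` norm `max_ε ‖f(ε)‖`. -/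
def linfNorm {n : ℕ} {Y : Type*} [NormedAddCommGroup Y]
    (f : (Fin n → Bool) → Y) : ℝ :=
  ⨆ ε : Fin n → Bool, ‖f ε‖

/-- The `L_p` norm for `p ∈ [1,∞]` encoded as `p : ℝ≥0∞`. -/
def lpNormE {n : ℕ} {Y : Type*} [NormedAddCommGroup Y] (p : ℝ≥0∞)
    (f : (Fin n → Bool) → Y) : ℝ :=
  if p = ⊤ then linfNorm f else lpNorm p.toReal f

/-- The scalar `L_p` norm of the gradient `‖(∑_i |∂_i f|²)^{1/2}‖_{L_p}`. -/
def gradLpNorm {n : ℕ} (p : ℝ) (f : (Fin n → Bool) → ℂ) : ℝ :=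
  lpNorm p (fun ε => Real.sqrt (∑ i : Fin n, ‖pderiv i f ε‖ ^ 2))

/-- The Rademacher projection `Rad f(ε) = ∑_i f̂({i}) ε_i`. -/
def Rad {n : ℕ} (f : (Fin n → Bool) → X) : (Fin n → Bool) → X :=
  fun ε => ∑ i : Fin n, sgn (ε i) • coeff f {i}

/-- A complex Banach space is `K`-convex if the Rademacher projections are uniformly
bounded on `L_q` for some `q ∈ (1,∞)`. -/
def KConvex (X : Type*) [NormedAddCommGroup X] [NormedSpace ℂ X] : Prop :=
  ∃ q : ℝ, 1 < q ∧ ∃ M : ℝ, ∀ (n : ℕ) (f : (Fin n → Bool) → X),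
    lpNorm q (Rad f) ≤ M * lpNorm q f

/-- `X` has cotype `q` with constant `C`. -/
def HasCotype (X : Type*) [NormedAddCommGroup X] [NormedSpace ℂ X] (q C : ℝ) : Prop :=
  ∀ (n : ℕ) (x : Fin n → X),
    C⁻¹ * (∑ i : Fin n, ‖x i‖ ^ q) ^ (1 / q) ≤
      ((2 ^ n : ℝ)⁻¹ * ∑ ε : Fin n → Bool, ‖∑ i : Fin n, sgn (ε i) • x i‖ ^ q) ^ (1 / q)

/-- The entropy `Ent(h)` of a nonnegative function on the cube. -/
def entropy {n : ℕ} (h : (Fin n → Bool) → ℝ) : ℝ :=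
  (2 ^ n : ℝ)⁻¹ * ∑ ε : Fin n → Bool, h ε * Real.log (h ε) -
    ((2 ^ n : ℝ)⁻¹ * ∑ ε : Fin n → Bool, h ε) *
      Real.log ((2 ^ n : ℝ)⁻¹ * ∑ ε : Fin n → Bool, h ε)

/-- The `L_∞` norm of the gradient `max_ε (∑_i |∂_i f(ε)|²)^{1/2}`. -/
def gradLinfNorm {n : ℕ} (f : (Fin n → Bool) → ℂ) : ℝ :=
  ⨆ ε : Fin n → Bool, Real.sqrt (∑ i : Fin n, ‖pderiv i f ε‖ ^ 2)

/-
Beck convexity, which K-convexity supplies, passes from `X` to `L_p({-1,1}^n; X)` with constants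
independent of `n`, and applied to the conditional expectations of the cube it bounds
`(1 - e^{-tΔ})^N` by `2^N - β`. By the Kato–Beurling criterion the heat semigroup then extends to a
sector around the half-line `[0, ∞)`, with norm at most `2` there, uniformly in `n`.

For `f` of degree at most `d`, the function `z ↦ e^{-(z+t)Δ} f` is an exponential sum with
frequencies `0, …, d`, bounded on the sector by `2 ‖e^{-tΔ} f‖`, whose value at `z = -t` is `f`.
To the left of the sector an exponential sum grows at most like a polynomial of degree `d` in `e^z`;
for small `t` harmonic measure in the complement of the sector improves the bound, the exponent `η`
being determined by the opening angle.
-/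

section ExponentialSums

variable {d : ℕ} {g : ℕ → X} {δ M : ℝ}

/-- The `X`-valued exponential sum `∑_{k ≤ d} e^{-kz} g_k`. For the levels `g_k` of a function of
degree at most `d` on the cube, its value at `t` is `e^{-tΔ} f`. -/
def expSum (d : ℕ) (g : ℕ → X) (z : ℂ) : X :=
  ∑ k ∈ Finset.range (d + 1), Complex.exp (-(k * z)) • g k

/-- The union of the closed discs with centre `t ≥ 0` and radius `δ * t`. For `δ < 1` it is a closed
convex sector around the positive half-line; this form suits both power series expansions around
points of the half-line and estimates by the distance to them. -/
def discSector (δ : ℝ) : Set ℂ := {z | ∃ t : ℝ, 0 ≤ t ∧ ‖z - t‖ ≤ δ * t}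

lemma zero_mem_discSector : (0 : ℂ) ∈ discSector δ := ⟨0, le_rfl, by simp⟩

lemma differentiable_expSum : Differentiable ℂ (expSum d g) := by
  unfold expSum
  fun_prop

lemma expSum_exp_smul (w z : ℂ) :
    expSum d (fun k => Complex.exp (-(k * w)) • g k) z = expSum d g (z + w) := by
  refine Finset.sum_congr rfl fun k _ => ?_
  rw [smul_smul, ← Complex.exp_add]
  ring_nf

lemma sum_exp_pow_smul (z : ℂ) :
    ∑ k ∈ Finset.range (d + 1), Complex.exp z ^ (d - k) • g k
      = Complex.exp (d * z) • expSum d g z := by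
  rw [expSum, Finset.smul_sum]
  refine Finset.sum_congr rfl fun k hk => ?_
  rw [smul_smul, ← Complex.exp_add, ← Complex.exp_nat_mul,
    Nat.cast_sub (Finset.mem_range_succ_iff.1 hk)]
  ring_nf

-- `e^{dz} expSum d g z` is a polynomial in `e^z`, so it obeys the maximum principle on a disc.
lemma norm_expSum_le_of_verticalSegment {R : ℝ}
    (hM : ∀ y : ℝ, |y| ≤ Real.pi → ‖expSum d g (R + y * Complex.I)‖ ≤ M) {z : ℂ}
    (hz : z.re ≤ R) : ‖expSum d g z‖ ≤ Real.exp (d * (R - z.re)) * M := by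
  have hR : Real.exp R ≠ 0 := (Real.exp_pos R).ne'
  have hdisc : ∀ u ∈ closure (Metric.ball (0 : ℂ) (Real.exp R)),
      ‖∑ k ∈ Finset.range (d + 1), u ^ (d - k) • g k‖ ≤ Real.exp (d * R) * M := by
    intro u hu
    refine Complex.norm_le_of_forall_mem_frontier_norm_le
      (f := fun u => ∑ k ∈ Finset.range (d + 1), u ^ (d - k) • g k)
      Metric.isBounded_ball (Differentiable.diffContOnCl (by fun_prop)) (fun v hv => ?_) hu
    rw [frontier_ball _ hR, mem_sphere_zero_iff_norm] at hv
    have hv_exp : v = Complex.exp (R + v.arg * Complex.I) := by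
      rw [Complex.exp_add, ← Complex.ofReal_exp, ← hv, Complex.norm_mul_exp_arg_mul_I]
    have hre : ((d : ℂ) * (R + v.arg * Complex.I)).re = d * R := by simp
    rw [hv_exp, sum_exp_pow_smul, norm_smul, Complex.norm_exp, hre]
    gcongr
    exact hM _ (Complex.abs_arg_le_pi v)
  have hexp : Complex.exp z ∈ closure (Metric.ball (0 : ℂ) (Real.exp R)) := by
    rwa [closure_ball _ hR, mem_closedBall_zero_iff, Complex.norm_exp, Real.exp_le_exp]
  have hle := hdisc _ hexp
  have hre : ((d : ℂ) * z).re = d * z.re := by simp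
  rw [sum_exp_pow_smul, norm_smul, Complex.norm_exp, hre] at hle
  rwa [mul_sub, Real.exp_sub, div_mul_eq_mul_div, le_div_iff₀' (Real.exp_pos _)]

lemma norm_expSum_le_of_discSector (hδ : 0 < δ) (hM : ∀ z ∈ discSector δ, ‖expSum d g z‖ ≤ M)
    {z : ℂ} (hz : z.re ≤ Real.pi / δ) :
    ‖expSum d g z‖ ≤ Real.exp (d * (Real.pi / δ - z.re)) * M := by
  refine norm_expSum_le_of_verticalSegment (fun y hy => hM _ ⟨Real.pi / δ, by positivity, ?_⟩) hz
  rwa [add_sub_cancel_left, norm_mul, Complex.norm_I, mul_one, Complex.norm_real,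
    Real.norm_eq_abs, mul_div_cancel₀ _ hδ.ne']

lemma norm_le_of_norm_le_on_halfDisc_boundary {H : ℂ → X}
    (hd : ∀ v : ℂ, 0 < v.re → DifferentiableAt ℂ H v)
    (hc : ∀ v : ℂ, 0 ≤ v.re → ContinuousAt H v)
    (hM : ∀ v : ℂ, ‖v‖ ≤ 1 → 0 ≤ v.re → (‖v‖ = 1 ∨ v.re = 0) → ‖H v‖ ≤ M)
    {v : ℂ} (hv : ‖v‖ < 1) (hre : 0 < v.re) : ‖H v‖ ≤ M := by
  set U : Set ℂ := {v | ‖v‖ < 1 ∧ 0 < v.re}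
  have hUo : IsOpen U := (isOpen_lt continuous_norm continuous_const).inter
    (isOpen_lt continuous_const Complex.continuous_re)
  have hUc : closure U ⊆ {v | ‖v‖ ≤ 1 ∧ 0 ≤ v.re} :=
    closure_minimal (fun v hv => ⟨hv.1.le, hv.2.le⟩)
      ((isClosed_le continuous_norm continuous_const).inter
        (isClosed_le continuous_const Complex.continuous_re))
  have hUb : Bornology.IsBounded U :=
    Metric.isBounded_ball.subset fun v hv => mem_ball_zero_iff.2 hv.1
  refine Complex.norm_le_of_forall_mem_frontier_norm_le hUb
    ⟨fun v hv => (hd v hv.2).differentiableWithinAt,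
      fun v hv => (hc v (hUc hv).2).continuousWithinAt⟩ (fun v hv => ?_)
    (subset_closure ⟨hv, hre⟩)
  rw [hUo.frontier_eq] at hv
  obtain ⟨h1, h2⟩ := hUc hv.1
  refine hM v h1 h2 ?_
  by_contra! h
  exact hv.2 ⟨lt_of_le_of_ne h1 h.1, lt_of_le_of_ne h2 h.2.symm⟩

lemma neg_cpow_mem_discSector (hδ : 0 ≤ δ) {v : ℂ} (hv : v ≠ 0) (hre : 0 ≤ v.re)
    (harg : Real.pi / 2 - δ / 4 ≤ |v.arg|) :
    -(v ^ ((2 - δ / Real.pi : ℝ) : ℂ)) ∈ discSector δ := by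
  set a := 2 - δ / Real.pi
  have ha : a * Real.pi = 2 * Real.pi - δ := by
    rw [sub_mul, div_mul_cancel₀ _ Real.pi_ne_zero]
  have hle := Complex.abs_arg_le_pi_div_two_iff.2 hre
  have ha2 : a ≤ 2 := sub_le_self _ (by positivity)
  obtain ⟨ψ, hψ, hexp⟩ : ∃ ψ : ℝ, |ψ| ≤ δ ∧
      -Complex.exp ((a * v.arg : ℝ) * Complex.I) = Complex.exp (Complex.I * ψ) := by
    rcases le_total 0 v.arg with h0 | h0
    · rw [abs_of_nonneg h0] at hle harg
      refine ⟨a * v.arg - Real.pi, abs_le.2 ⟨?_, ?_⟩, ?_⟩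
      · nlinarith
      · nlinarith
      · push_cast
        rw [mul_sub, Complex.exp_sub, mul_comm Complex.I (Real.pi : ℂ), Complex.exp_pi_mul_I,
          div_neg, div_one, mul_comm]
    · rw [abs_of_nonpos h0] at hle harg
      refine ⟨a * v.arg + Real.pi, abs_le.2 ⟨?_, ?_⟩, ?_⟩
      · nlinarith
      · nlinarith
      · push_cast
        rw [mul_add, Complex.exp_add, mul_comm Complex.I (Real.pi : ℂ), Complex.exp_pi_mul_I,
          mul_neg_one, mul_comm]
  have hpow : -(v ^ (a : ℂ)) - (‖v‖ ^ a : ℝ)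
      = (‖v‖ ^ a : ℝ) * (Complex.exp (Complex.I * ψ) - 1) := by
    rw [← hexp, Complex.cpow_def_of_ne_zero hv, Complex.log, add_mul, Complex.exp_add,
      Real.rpow_def_of_pos (norm_pos_iff.2 hv)]
    push_cast
    ring_nf
  refine ⟨‖v‖ ^ a, by positivity, ?_⟩
  rw [hpow, norm_mul, Complex.norm_real, Real.norm_of_nonneg (by positivity), mul_comm]
  gcongr
  exact Real.norm_exp_I_mul_ofReal_sub_one_le.trans hψ

lemma norm_exp_mul_smul_cpow_le {F : ℂ → X} {K : ℝ} (hδ : 0 < δ) (hδ2 : δ < 2 * Real.pi)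
    (hK : 0 ≤ K) (hM : ∀ z ∈ discSector δ, ‖F z‖ ≤ M)
    (hdisc : ∀ z : ℂ, ‖z‖ ≤ 1 → ‖F z‖ ≤ Real.exp K * M) {v : ℂ} (hre : 0 ≤ v.re)
    (hv : ‖v‖ = 1 ∨ v.re = 0) :
    ‖Complex.exp (-((K / Real.sin (δ / 4) : ℝ) * v)) •
      F (-(v ^ ((2 - δ / Real.pi : ℝ) : ℂ)))‖ ≤ M := by
  have hsin : 0 < Real.sin (δ / 4) := Real.sin_pos_of_pos_of_lt_pi (by positivity) (by linarith)
  rw [norm_smul, Complex.norm_exp, Complex.neg_re, Complex.re_ofReal_mul]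
  have hsector (h : -(v ^ ((2 - δ / Real.pi : ℝ) : ℂ)) ∈ discSector δ) :
      Real.exp (-(K / Real.sin (δ / 4) * v.re)) *
        ‖F (-(v ^ ((2 - δ / Real.pi : ℝ) : ℂ)))‖ ≤ M :=
    (mul_le_of_le_one_left (norm_nonneg _)
      (Real.exp_le_one_iff.2 (neg_nonpos.2 (by positivity)))).trans (hM _ h)
  rcases eq_or_ne v 0 with rfl | hv0
  · refine hsector ?_
    have ha : (2 - δ / Real.pi : ℝ) ≠ 0 :=
      (sub_pos.2 ((div_lt_iff₀ Real.pi_pos).2 hδ2)).ne'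
    rw [Complex.zero_cpow (Complex.ofReal_ne_zero.2 ha), neg_zero]
    exact zero_mem_discSector
  rcases le_or_gt (Real.pi / 2 - δ / 4) |v.arg| with harg | harg
  · exact hsector (neg_cpow_mem_discSector hδ.le hv0 hre harg)
  have hcos : Real.sin (δ / 4) ≤ Real.cos v.arg := by
    rw [← Real.cos_pi_div_two_sub, ← Real.cos_abs v.arg]
    exact Real.cos_le_cos_of_nonneg_of_le_pi (abs_nonneg _) (by linarith) harg.le
  have hnorm : ‖v‖ = 1 := hv.resolve_right fun h => by
    rw [← Complex.norm_mul_cos_arg] at h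
    exact (mul_pos (norm_pos_iff.2 hv0) (hsin.trans_le hcos)).ne' h
  have hKre : K ≤ K / Real.sin (δ / 4) * v.re := by
    rw [← Complex.norm_mul_cos_arg v, hnorm, one_mul, div_mul_eq_mul_div, le_div_iff₀ hsin]
    gcongr
  calc Real.exp (-(K / Real.sin (δ / 4) * v.re)) * ‖F (-(v ^ ((2 - δ / Real.pi : ℝ) : ℂ)))‖
      ≤ Real.exp (-K) * (Real.exp K * M) := by
        gcongr
        refine hdisc _ ?_
        rw [norm_neg, Complex.norm_cpow_real, hnorm, Real.one_rpow]
    _ = M := by rw [← mul_assoc, ← Real.exp_add, neg_add_cancel, Real.exp_zero, one_mul]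

-- The map `v ↦ -v^(2 - δ/π)` sends the imaginary diameter of the right half-disc into the sector
-- and the half-circle into the unit circle, and `e^{-Kv/sin(δ/4)}` absorbs `e^K` on the arc.
lemma norm_neg_le_of_discSector {F : ℂ → X} {K : ℝ} (hF : Differentiable ℂ F) (hδ : 0 < δ)
    (hδ2 : δ < 2 * Real.pi) (hK : 0 ≤ K) (hM : ∀ z ∈ discSector δ, ‖F z‖ ≤ M)
    (hdisc : ∀ z : ℂ, ‖z‖ ≤ 1 → ‖F z‖ ≤ Real.exp K * M) {t : ℝ} (ht0 : 0 < t) (ht1 : t < 1) :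
    ‖F (-t)‖ ≤ Real.exp (K / Real.sin (δ / 4) * t ^ (1 / (2 - δ / Real.pi))) * M := by
  set a := 2 - δ / Real.pi
  set c := K / Real.sin (δ / 4)
  have ha : 0 < a := sub_pos.2 ((div_lt_iff₀ Real.pi_pos).2 hδ2)
  have hs0 : 0 < t ^ (1 / a) := Real.rpow_pos_of_pos ht0 _
  have hbound : ‖Complex.exp (-(c * (t ^ (1 / a) : ℝ))) • F (-(((t ^ (1 / a) : ℝ) : ℂ) ^ (a : ℂ)))‖
      ≤ M := by
    refine norm_le_of_norm_le_on_halfDisc_boundary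
      (H := fun v => Complex.exp (-(c * v)) • F (-(v ^ (a : ℂ)))) (fun v hv => ?_) (fun v hv => ?_)
      (fun v _ hre hv => norm_exp_mul_smul_cpow_le hδ hδ2 hK hM hdisc hre hv) ?_ ?_
    · have hpow : DifferentiableAt ℂ (fun v : ℂ => v ^ (a : ℂ)) v :=
        differentiableAt_id.cpow_const (Or.inl hv)
      exact DifferentiableAt.smul (by fun_prop) ((hF _).comp v hpow.neg)
    · have hpow : ContinuousAt (fun v : ℂ => v ^ (a : ℂ)) v :=
        Complex.continuousAt_cpow_const_of_re_pos (Or.inl hv) (by simpa using ha)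
      exact ContinuousAt.smul (by fun_prop) (hF.continuous.continuousAt.comp hpow.neg)
    · rw [Complex.norm_real, Real.norm_of_nonneg hs0.le]
      exact Real.rpow_lt_one ht0.le ht1 (by positivity)
    · simpa using hs0
  rw [← Complex.ofReal_cpow hs0.le, ← Real.rpow_mul ht0.le, one_div_mul_cancel ha.ne',
    Real.rpow_one, norm_smul, ← Complex.ofReal_mul, ← Complex.ofReal_neg,
    Complex.norm_exp_ofReal, Real.exp_neg] at hbound
  exact (inv_mul_le_iff₀ (Real.exp_pos _)).1 hbound

theorem norm_expSum_neg_le (hδ : 0 < δ) (hδ1 : δ ≤ 1)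
    (hM : ∀ z ∈ discSector δ, ‖expSum d g z‖ ≤ M) {t : ℝ} (ht : 0 ≤ t) :
    ‖expSum d g (-t)‖ ≤ Real.exp ((1 + Real.pi / δ) / Real.sin (δ / 4) * d *
      max t (t ^ (1 / (2 - δ / Real.pi)))) * M := by
  have hM0 : 0 ≤ M := (norm_nonneg _).trans (hM 0 zero_mem_discSector)
  have hsin : 0 < Real.sin (δ / 4) :=
    Real.sin_pos_of_pos_of_lt_pi (by positivity) (by linarith [Real.pi_gt_three])
  have hπδ : 1 ≤ Real.pi / δ := (one_le_div hδ).2 (by linarith [Real.pi_gt_three])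
  rcases ht.eq_or_lt with rfl | ht0
  · refine (hM _ (by simpa using zero_mem_discSector)).trans (le_mul_of_one_le_left hM0 ?_)
    exact Real.one_le_exp (by positivity)
  rcases lt_or_ge t 1 with ht1 | ht1
  · have hdisc : ∀ z : ℂ, ‖z‖ ≤ 1 →
        ‖expSum d g z‖ ≤ Real.exp ((1 + Real.pi / δ) * d) * M := by
      intro z hz
      obtain ⟨hre, hre'⟩ := abs_le.1 ((Complex.abs_re_le_norm z).trans hz)
      refine (norm_expSum_le_of_discSector hδ hM (by linarith)).trans ?_
      rw [mul_comm (1 + _)]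
      gcongr
      linarith
    refine (norm_neg_le_of_discSector differentiable_expSum hδ (by linarith [Real.pi_gt_three])
      (by positivity) hM hdisc ht0 ht1).trans ?_
    rw [mul_div_right_comm]
    gcongr
    exact le_max_right _ _
  · refine (norm_expSum_le_of_discSector hδ hM ?_).trans ?_
    · simp only [Complex.neg_re, Complex.ofReal_re]
      linarith
    refine mul_le_mul_of_nonneg_right (Real.exp_le_exp.2 ?_) hM0
    calc (d : ℝ) * (Real.pi / δ - (-(t : ℂ)).re)
        = d * (Real.pi / δ + t) := by simp
      _ ≤ d * ((1 + Real.pi / δ) * t) := by gcongr; nlinarith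
      _ = (1 + Real.pi / δ) / 1 * d * t := by ring
      _ ≤ _ := by gcongr; exacts [Real.sin_le_one _, le_max_left _ _]

end ExponentialSums

section LaplaceInversion

open MeasureTheory Filter Topology FourierTransform

-- `L (φ x)` need not be integrable when `F` is not complete, hence the passage to functionals.
lemma norm_map_integral_le {𝕜 E F α : Type*} [RCLike 𝕜] [NormedAddCommGroup E] [NormedSpace 𝕜 E]
    [NormedSpace ℝ E] [CompleteSpace E] [NormedAddCommGroup F] [NormedSpace 𝕜 F]
    [MeasurableSpace α] {μ : Measure α} (L : E →L[𝕜] F) {φ : α → E} {b : α → ℝ}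
    (hφ : Integrable φ μ) (hb : Integrable b μ) (h : ∀ x, ‖L (φ x)‖ ≤ b x) :
    ‖L (∫ x, φ x ∂μ)‖ ≤ ∫ x, b x ∂μ := by
  obtain ⟨ℓ, hℓ, hLℓ⟩ := exists_dual_vector'' 𝕜 (L (∫ x, φ x ∂μ))
  have hcomp : (‖L (∫ x, φ x ∂μ)‖ : 𝕜) = ∫ x, ℓ (L (φ x)) ∂μ := by
    rw [← hLℓ]
    exact ((ℓ.comp L).integral_comp_comm hφ).symm
  rw [← RCLike.norm_coe_norm (𝕜 := 𝕜), hcomp]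
  refine norm_integral_le_of_norm_le hb (Eventually.of_forall fun x => ?_)
  exact (ℓ.le_of_opNorm_le_of_le hℓ (h x)).trans_eq (one_mul _)

lemma integrableOn_pow_mul_exp_neg_mul {μ : ℂ} (hμ : 0 < μ.re) (n : ℕ) :
    IntegrableOn (fun x : ℝ => (x : ℂ) ^ n * Complex.exp (-(μ * x))) (Set.Ioi 0) := by
  refine Integrable.mono' (integrableOn_rpow_mul_exp_neg_mul_rpow (s := n)
    (by linarith [n.cast_nonneg (α := ℝ)]) one_pos hμ) (by fun_prop) ?_
  refine (ae_restrict_iff' measurableSet_Ioi).2 (Eventually.of_forall fun x hx => ?_)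
  rw [norm_mul, Complex.norm_exp, norm_pow, Complex.norm_real, Real.norm_of_nonneg (le_of_lt hx)]
  simp

lemma tendsto_pow_mul_exp_neg_mul {μ : ℂ} (hμ : 0 < μ.re) (n : ℕ) :
    Tendsto (fun x : ℝ => (x : ℂ) ^ n * Complex.exp (-(μ * x))) atTop (𝓝 0) := by
  rw [tendsto_zero_iff_norm_tendsto_zero]
  have h := (isLittleO_pow_exp_pos_mul_atTop n hμ).tendsto_div_nhds_zero.norm
  rw [norm_zero] at h
  refine h.congr fun x => ?_
  simp [Complex.norm_exp, Real.exp_neg, div_eq_mul_inv]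

lemma integral_pow_mul_exp_neg_mul_Ioi {μ : ℂ} (hμ : 0 < μ.re) (n : ℕ) :
    ∫ x in Set.Ioi (0 : ℝ), (x : ℂ) ^ n * Complex.exp (-(μ * x)) = n.factorial / μ ^ (n + 1) := by
  have hμ0 : μ ≠ 0 := by
    rintro rfl
    simp at hμ
  induction n with
  | zero =>
    have h := integral_exp_mul_complex_Ioi (a := -μ) (by simpa using hμ) 0
    simpa [neg_div_neg_eq] using h
  | succ n ih =>
    have hderiv (x : ℝ) : HasDerivAt (fun x : ℝ => (x : ℂ) ^ (n + 1) * Complex.exp (-(μ * x)))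
        ((n + 1) * ((x : ℂ) ^ n * Complex.exp (-(μ * x)))
          - μ * ((x : ℂ) ^ (n + 1) * Complex.exp (-(μ * x)))) x := by
      have hx : HasDerivAt (fun x : ℝ => (x : ℂ)) 1 x := Complex.ofRealCLM.hasDerivAt
      refine ((hx.pow (n + 1)).mul (hx.const_mul μ).neg.cexp).congr_deriv ?_
      simp
      ring
    have hn := (integrableOn_pow_mul_exp_neg_mul hμ n).const_mul (n + 1 : ℂ)
    have hn1 := (integrableOn_pow_mul_exp_neg_mul hμ (n + 1)).const_mul μ
    have hparts := integral_Ioi_of_hasDerivAt_of_tendsto' (fun x _ => hderiv x) (hn.sub hn1)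
      (tendsto_pow_mul_exp_neg_mul hμ (n + 1))
    rw [integral_sub hn hn1, integral_const_mul, integral_const_mul, ih] at hparts
    simp only [Complex.ofReal_zero, ne_eq, n.succ_ne_zero, not_false_eq_true, zero_pow, zero_mul,
      sub_zero, sub_eq_zero] at hparts
    rw [eq_div_iff (pow_ne_zero _ hμ0), pow_succ μ (n + 1), ← mul_assoc, mul_right_comm,
      mul_comm _ μ, ← hparts, Nat.factorial_succ]
    push_cast
    field_simp

lemma one_add_sq_le_norm_sq {a : ℝ} (ha : 1 ≤ a) (w : ℝ) :
    1 + w ^ 2 ≤ ‖(a + 2 * Real.pi * w * Complex.I : ℂ)‖ ^ 2 := by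
  have hre : (a + 2 * Real.pi * w * Complex.I : ℂ).re = a := by simp
  have him : (a + 2 * Real.pi * w * Complex.I : ℂ).im = 2 * Real.pi * w := by simp
  rw [Complex.sq_norm, Complex.normSq_apply, hre, him]
  have hπ : 1 ≤ (2 * Real.pi) ^ 2 := by nlinarith [Real.pi_gt_three]
  nlinarith [mul_le_mul_of_nonneg_right hπ (sq_nonneg w)]

lemma integrable_inv_cube {a : ℝ} (ha : 1 ≤ a) :
    Integrable fun w : ℝ => ((a + 2 * Real.pi * w * Complex.I : ℂ) ^ 3)⁻¹ := by
  have hnorm (w : ℝ) : 1 ≤ ‖(a + 2 * Real.pi * w * Complex.I : ℂ)‖ := by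
    nlinarith [one_add_sq_le_norm_sq ha w, norm_nonneg (a + 2 * Real.pi * w * Complex.I : ℂ)]
  have hne (w : ℝ) : (a + 2 * Real.pi * w * Complex.I : ℂ) ^ 3 ≠ 0 :=
    pow_ne_zero _ (norm_pos_iff.1 (one_pos.trans_le (hnorm w)))
  refine integrable_inv_one_add_sq.mono'
    (Continuous.inv₀ (by fun_prop) hne).aestronglyMeasurable (Eventually.of_forall fun w => ?_)
  rw [norm_inv, norm_pow]
  gcongr
  exact (one_add_sq_le_norm_sq ha w).trans (pow_le_pow_right₀ (hnorm w) (by norm_num))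

lemma fourier_indicator_sq_mul_exp_neg {a : ℝ} (ha : 0 < a) (w : ℝ) :
    𝓕 ((Set.Ioi (0 : ℝ)).indicator fun x : ℝ => (x : ℂ) ^ 2 * Complex.exp (-(a * x))) w
      = 2 * ((a + 2 * Real.pi * w * Complex.I : ℂ) ^ 3)⁻¹ := by
  have hshift (v : ℝ) : Complex.exp (↑(-2 * Real.pi * v * w) * Complex.I) •
      (Set.Ioi (0 : ℝ)).indicator (fun x : ℝ => (x : ℂ) ^ 2 * Complex.exp (-(a * x))) v
      = (Set.Ioi (0 : ℝ)).indicator (fun x : ℝ => (x : ℂ) ^ 2 *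
          Complex.exp (-((a + 2 * Real.pi * w * Complex.I) * x))) v := by
    by_cases hv : v ∈ Set.Ioi (0 : ℝ)
    · rw [Set.indicator_of_mem hv, Set.indicator_of_mem hv, smul_eq_mul, mul_left_comm,
        ← Complex.exp_add]
      congr 2
      push_cast
      ring
    · rw [Set.indicator_of_notMem hv, Set.indicator_of_notMem hv, smul_zero]
  rw [Real.fourier_real_eq_integral_exp_smul]
  simp_rw [hshift]
  rw [integral_indicator measurableSet_Ioi,
    integral_pow_mul_exp_neg_mul_Ioi (by simpa using ha) 2, div_eq_mul_inv]
  norm_num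

-- Fourier inversion at `x = 1` for `x ↦ x² e^{-ax}` on the positive half-line.
lemma integral_exp_mul_inv_cube {a : ℝ} (ha : 1 ≤ a) :
    ∫ w : ℝ, Complex.exp (2 * Real.pi * w * Complex.I) *
      (2 * ((a + 2 * Real.pi * w * Complex.I : ℂ) ^ 3)⁻¹) = Complex.exp (-a) := by
  have ha0 : 0 < a := one_pos.trans_le ha
  set f : ℝ → ℂ := (Set.Ioi (0 : ℝ)).indicator fun x => (x : ℂ) ^ 2 * Complex.exp (-(a * x))
    with hf
  have hfi : Integrable f := (integrable_indicator_iff measurableSet_Ioi).2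
    (integrableOn_pow_mul_exp_neg_mul (by simpa using ha0) 2)
  have hF : 𝓕 f = fun w : ℝ => 2 * ((a + 2 * Real.pi * w * Complex.I : ℂ) ^ 3)⁻¹ :=
    funext (fourier_indicator_sq_mul_exp_neg ha0)
  have hcont : ContinuousAt f 1 := by
    have heq : f =ᶠ[𝓝 1] fun x : ℝ => (x : ℂ) ^ 2 * Complex.exp (-(a * x)) :=
      (Set.eqOn_indicator).eventuallyEq_of_mem (Ioi_mem_nhds one_pos)
    rw [continuousAt_congr heq]
    fun_prop
  have hinv := hfi.fourierInv_fourier_eq (by rw [hF]; exact (integrable_inv_cube ha).const_mul 2)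
    hcont
  have hf1 : f 1 = Complex.exp (-a) := by
    rw [hf, Set.indicator_of_mem (Set.mem_Ioi.2 one_pos)]
    simp
  rw [hF, Real.fourierInv_eq', hf1] at hinv
  rw [← hinv]
  refine integral_congr_ae (Eventually.of_forall fun w => ?_)
  simp only [smul_eq_mul, RCLike.inner_apply, conj_trivial]
  push_cast
  ring_nf

lemma exp_mul_mul_inv_cube_eq (k w : ℝ) :
    2 * Complex.exp (1 + 2 * Real.pi * w * Complex.I)
        * (k * ((1 + 2 * Real.pi * w * Complex.I + k : ℂ) ^ 3)⁻¹)
      = Complex.exp 1 * k * (Complex.exp (2 * Real.pi * w * Complex.I)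
        * (2 * (((1 + k : ℝ) + 2 * Real.pi * w * Complex.I : ℂ) ^ 3)⁻¹)) := by
  rw [Complex.exp_add, Complex.ofReal_add, Complex.ofReal_one, add_right_comm]
  ring

lemma integrable_exp_mul_mul_inv_cube {k : ℝ} (hk : 0 ≤ k) :
    Integrable fun w : ℝ => 2 * Complex.exp (1 + 2 * Real.pi * w * Complex.I)
      * (k * ((1 + 2 * Real.pi * w * Complex.I + k : ℂ) ^ 3)⁻¹) := by
  simp only [exp_mul_mul_inv_cube_eq]
  refine ((integrable_inv_cube (le_add_of_nonneg_right hk)).const_mul 2).bdd_mul (c := 1)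
    (by fun_prop) (Eventually.of_forall fun w => ?_) |>.const_mul _
  rw [Complex.norm_exp]
  simp

lemma integral_exp_mul_mul_inv_cube {k : ℝ} (hk : 0 ≤ k) :
    ∫ w : ℝ, 2 * Complex.exp (1 + 2 * Real.pi * w * Complex.I)
      * (k * ((1 + 2 * Real.pi * w * Complex.I + k : ℂ) ^ 3)⁻¹) = k * Complex.exp (-k) := by
  simp only [exp_mul_mul_inv_cube_eq]
  rw [integral_const_mul, integral_exp_mul_inv_cube (le_add_of_nonneg_right hk), mul_right_comm,
    ← Complex.exp_add]
  push_cast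
  ring_nf

end LaplaceInversion

section Multipliers

variable {ι B : Type*} [NormedRing B] [NormedAlgebra ℂ B]

/-- The semigroup `T_z = e^{-zκ}` with generator `-κ` in a functional calculus `op` that realises
the functions on the spectrum `ι` as elements of a Banach algebra. -/
def multiplierSemigroup (op : (ι → ℂ) →ₐ[ℂ] B) (κ : ι → ℝ) (z : ℂ) : B :=
  op fun i => Complex.exp (-(z * κ i))

/-- The hypotheses of the Kato–Beurling criterion for holomorphy of the semigroup `T_t = e^{-tκ}`:
contractivity, and the bound `‖(1 - T_t)^N‖ ≤ 2^N - β`, which keeps `-1` away from the spectrum of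
`T_t` uniformly in `t`. -/
structure BeurlingCondition (op : (ι → ℂ) →ₐ[ℂ] B) (κ : ι → ℝ) (N : ℕ) (β : ℝ) : Prop where
  norm_le_one : ∀ t : ℝ, 0 ≤ t → ‖multiplierSemigroup op κ t‖ ≤ 1
  norm_one_sub_pow_le : ∀ t : ℝ, 0 ≤ t → ‖(1 - multiplierSemigroup op κ t) ^ N‖ ≤ 2 ^ N - β

variable {op : (ι → ℂ) →ₐ[ℂ] B} {κ : ι → ℝ} {N : ℕ} {β : ℝ}

lemma multiplierSemigroup_zero : multiplierSemigroup op κ 0 = 1 := by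
  rw [multiplierSemigroup, ← map_one op]
  congr 1
  funext i
  simp

lemma multiplierSemigroup_add (z w : ℂ) :
    multiplierSemigroup op κ (z + w) = multiplierSemigroup op κ z * multiplierSemigroup op κ w := by
  rw [multiplierSemigroup, multiplierSemigroup, multiplierSemigroup, ← map_mul]
  congr 1
  funext i
  rw [Pi.mul_apply, ← Complex.exp_add]
  ring_nf

lemma BeurlingCondition.norm_one_le (h : BeurlingCondition op κ N β) : ‖(1 : B)‖ ≤ 1 := by
  simpa only [Complex.ofReal_zero, multiplierSemigroup_zero] using h.norm_le_one 0 le_rfl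

lemma hasDerivAt_exp_smul_multiplierSemigroup [Finite ι] (l : ℂ) (b : B) (u : ℝ) :
    HasDerivAt (fun u : ℝ => Complex.exp (-(l * u)) • (multiplierSemigroup op κ u * b))
      (-(Complex.exp (-(l * u)) • (multiplierSemigroup op κ u * (op (fun i => l + κ i) * b))))
      u := by
  cases nonempty_fintype ι
  let L : (ι → ℂ) →L[ℝ] B :=
    (LinearMap.toContinuousLinearMap op.toLinearMap).restrictScalars ℝ
  have hL (m) : L m = op m := rfl
  have hmul : HasDerivAt (fun u : ℝ => (fun i => Complex.exp (-((l + κ i) * u)) : ι → ℂ))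
      (fun i => -((l + κ i) * Complex.exp (-((l + κ i) * u)))) u := by
    refine hasDerivAt_pi.2 fun i => ?_
    have hu : HasDerivAt (fun x : ℝ => (x : ℂ)) 1 u := Complex.ofRealCLM.hasDerivAt
    refine (hu.const_mul (l + κ i)).neg.cexp.congr_deriv ?_
    simp only [Pi.neg_apply, mul_one]
    ring
  have hsplit (u : ℝ) : (fun i => Complex.exp (-((l + κ i) * u)) : ι → ℂ)
      = Complex.exp (-(l * u)) • fun i => Complex.exp (-(u * κ i)) := by
    funext i
    rw [Pi.smul_apply, smul_eq_mul, ← Complex.exp_add]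
    ring_nf
  refine ((L.hasFDerivAt.comp_hasDerivAt u hmul).mul_const b).congr_of_eventuallyEq
    (Filter.Eventually.of_forall fun u => ?_) |>.congr_deriv ?_
  · simp only [Function.comp_apply, hL, hsplit, map_smul, smul_mul_assoc, multiplierSemigroup]
  · have hderiv : (fun i => -((l + κ i) * Complex.exp (-((l + κ i) * u))) : ι → ℂ)
        = -(Complex.exp (-(l * u)) •
          ((fun i => Complex.exp (-(u * κ i))) * fun i => l + κ i)) := by
      rw [← smul_mul_assoc, ← hsplit]
      funext i
      simp only [Pi.neg_apply, Pi.mul_apply]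
      ring
    rw [hL, hderiv, map_neg, map_smul, map_mul, neg_mul, smul_mul_assoc, mul_assoc]
    rfl

lemma norm_sub_exp_smul_multiplierSemigroup_le [Finite ι]
    (hT : ∀ t : ℝ, 0 ≤ t → ‖multiplierSemigroup op κ t‖ ≤ 1) {l : ℂ} (hl : 0 ≤ l.re) (b : B)
    {t : ℝ} (ht : 0 ≤ t) :
    ‖b - Complex.exp (-(l * t)) • (multiplierSemigroup op κ t * b)‖
      ≤ t * ‖op (fun i => l + κ i) * b‖ := by
  have h := norm_image_sub_le_of_norm_deriv_le_segment' (a := 0) (b := t)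
    (fun x _ =>
      (hasDerivAt_exp_smul_multiplierSemigroup (op := op) (κ := κ) l b x).hasDerivWithinAt)
    (C := ‖op (fun i => l + κ i) * b‖) (fun x hx => ?_) t ⟨ht, le_rfl⟩
  · simpa only [Complex.ofReal_zero, mul_zero, neg_zero, Complex.exp_zero, one_smul,
      multiplierSemigroup_zero, one_mul, sub_zero, norm_sub_rev, mul_comm t] using h
  · have hexp : ‖Complex.exp (-(l * x))‖ ≤ 1 := by
      rw [Complex.norm_exp, Complex.neg_re, Complex.re_mul_ofReal]
      exact Real.exp_le_one_iff.2 (neg_nonpos.2 (mul_nonneg hl hx.1))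
    rw [norm_neg, norm_smul]
    refine (mul_le_of_le_one_left (norm_nonneg _) hexp).trans ((norm_mul_le _ _).trans ?_)
    exact mul_le_of_le_one_left (norm_nonneg _) (hT x hx.1)

lemma mul_norm_le_norm_add_mul {T : B} (hT : ‖T‖ ≤ 1) (hN : ‖(1 - T) ^ N‖ ≤ 2 ^ N - β) (b : B) :
    β * ‖b‖ ≤ N * 2 ^ N * ‖b + T * b‖ := by
  have hpow (k : ℕ) (c : B) : ‖(1 - T) ^ k * c‖ ≤ 2 ^ k * ‖c‖ := by
    induction k with
    | zero => simp
    | succ k ih =>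
      rw [pow_succ', mul_assoc, sub_mul, one_mul, pow_succ]
      have hTc := norm_mul_le_of_le hT (le_refl ‖(1 - T) ^ k * c‖)
      linarith [norm_sub_le ((1 - T) ^ k * c) (T * ((1 - T) ^ k * c))]
  have hiter (k : ℕ) : 2 ^ k * ‖b‖ ≤ k * 2 ^ k * ‖b + T * b‖ + ‖(1 - T) ^ k * b‖ := by
    induction k with
    | zero => simp
    | succ k ih =>
      have hsplit : (2 : ℂ) • ((1 - T) ^ k * b)
          = (1 - T) ^ k * (b + T * b) + (1 - T) ^ (k + 1) * b := by
        rw [two_smul, pow_succ]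
        noncomm_ring
      have htwo := norm_add_le ((1 - T) ^ k * (b + T * b)) ((1 - T) ^ (k + 1) * b)
      rw [← hsplit, norm_smul, Complex.norm_two] at htwo
      push_cast
      rw [pow_succ]
      nlinarith [hpow k (b + T * b), norm_nonneg (b + T * b), pow_pos (two_pos (α := ℝ)) k]
  nlinarith [hiter N, norm_mul_le ((1 - T) ^ N) b, mul_le_mul_of_nonneg_right hN (norm_nonneg b)]

lemma re_mul_norm_le_norm_op_add_mul [Finite ι]
    (hT : ∀ t : ℝ, 0 ≤ t → ‖multiplierSemigroup op κ t‖ ≤ 1) {l : ℂ} (hl : 0 < l.re) (b : B) :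
    l.re * ‖b‖ ≤ 2 * ‖op (fun i => l + κ i) * b‖ := by
  have hle := norm_sub_exp_smul_multiplierSemigroup_le hT hl.le b (one_div_pos.2 hl).le
  set c := Complex.exp (-(l * (1 / l.re : ℝ))) • (multiplierSemigroup op κ (1 / l.re : ℝ) * b)
  have hhalf : ‖c‖ ≤ 1 / 2 * ‖b‖ := by
    have hexp : ‖Complex.exp (-(l * (1 / l.re : ℝ)))‖ ≤ 1 / 2 := by
      rw [Complex.norm_exp, Complex.neg_re, Complex.re_mul_ofReal, mul_one_div_cancel hl.ne',
        Real.exp_neg, ← one_div]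
      exact one_div_le_one_div_of_le two_pos (by linarith [Real.add_one_le_exp 1])
    rw [norm_smul]
    gcongr
    exact (norm_mul_le_of_le (hT _ (one_div_pos.2 hl).le) le_rfl).trans_eq (one_mul _)
  have hlower := (norm_sub_norm_le b c).trans hle
  rw [one_div_mul_eq_div, le_div_iff₀ hl] at hlower
  nlinarith

-- For `l = i y` and `t = π / |y|` the factor `e^{-lt}` is `-1`.
lemma BeurlingCondition.abs_mul_norm_le_norm_op_I_mul_add_mul [Finite ι]
    (h : BeurlingCondition op κ N β) (y : ℝ) (b : B) :
    |y| * (β * ‖b‖) ≤ Real.pi * (N * 2 ^ N) * ‖op (fun i => y * Complex.I + κ i) * b‖ := by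
  rcases eq_or_ne y 0 with rfl | hy
  · rw [abs_zero, zero_mul]
    positivity
  have ht : 0 ≤ Real.pi / |y| := by positivity
  have hexp : Complex.exp (-(y * Complex.I * (Real.pi / |y| : ℝ))) = -1 := by
    have hmul (s : ℝ) (hs : s * Real.pi = y * (Real.pi / |y|)) :
        Complex.exp (-(y * Complex.I * (Real.pi / |y| : ℝ)))
          = Complex.exp (-(s * (Real.pi * Complex.I))) := by
      rw [mul_right_comm, ← Complex.ofReal_mul, ← hs, Complex.ofReal_mul, mul_assoc]
    rcases abs_choice y with h' | h'
    · rw [hmul 1 (by rw [h']; field_simp), Complex.ofReal_one, one_mul, Complex.exp_neg,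
        Complex.exp_pi_mul_I, inv_neg, inv_one]
    · rw [hmul (-1) (by rw [h']; field_simp), Complex.ofReal_neg, Complex.ofReal_one, neg_one_mul,
        neg_neg, Complex.exp_pi_mul_I]
  have hle := norm_sub_exp_smul_multiplierSemigroup_le (l := y * Complex.I) h.norm_le_one
    (by simp) b ht
  rw [hexp, neg_one_smul, sub_neg_eq_add] at hle
  have hb := mul_norm_le_norm_add_mul (h.norm_le_one _ ht) (h.norm_one_sub_pow_le _ ht) b
  calc |y| * (β * ‖b‖)
      ≤ |y| * (N * 2 ^ N * (Real.pi / |y| * ‖op (fun i => y * Complex.I + κ i) * b‖)) := by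
        refine mul_le_mul_of_nonneg_left (hb.trans ?_) (abs_nonneg y)
        gcongr
    _ = Real.pi * (N * 2 ^ N) * ‖op (fun i => y * Complex.I + κ i) * b‖ := by field_simp

lemma BeurlingCondition.norm_mul_norm_le [Finite ι] (h : BeurlingCondition op κ N β) (hβ : 0 < β)
    {l : ℂ} (hl : 0 < l.re) (b : B) :
    ‖l‖ * ‖b‖ ≤ (2 + 3 * (Real.pi * (N * 2 ^ N)) / β) * ‖op (fun i => l + κ i) * b‖ := by
  set r := ‖op (fun i => l + κ i) * b‖
  have hre : l.re * ‖b‖ ≤ 2 * r := re_mul_norm_le_norm_op_add_mul h.norm_le_one hl b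
  have hsplit : op (fun i => l.im * Complex.I + κ i) * b
      = op (fun i => l + κ i) * b - (l.re : ℂ) • b := by
    have hfun : (fun i => l.im * Complex.I + κ i : ι → ℂ)
        = (fun i => l + κ i) - (l.re : ℂ) • 1 := by
      funext i
      simp only [Pi.sub_apply, Pi.smul_apply, Pi.one_apply, smul_eq_mul, mul_one]
      linear_combination Complex.re_add_im l
    rw [hfun, map_sub, map_smul, map_one, sub_mul, smul_mul_assoc, one_mul]
  have him_op : ‖op (fun i => l.im * Complex.I + κ i) * b‖ ≤ 3 * r := by
    rw [hsplit]
    refine (norm_sub_le _ _).trans ?_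
    rw [norm_smul, Complex.norm_real, Real.norm_of_nonneg hl.le]
    linarith
  have him : |l.im| * ‖b‖ ≤ 3 * (Real.pi * (N * 2 ^ N)) / β * r := by
    rw [div_mul_eq_mul_div, le_div_iff₀ hβ]
    calc |l.im| * ‖b‖ * β = |l.im| * (β * ‖b‖) := by ring
      _ ≤ Real.pi * (N * 2 ^ N) * (3 * r) :=
        (h.abs_mul_norm_le_norm_op_I_mul_add_mul _ b).trans (by gcongr)
      _ = 3 * (Real.pi * (N * 2 ^ N)) * r := by ring
  calc ‖l‖ * ‖b‖ ≤ (l.re + |l.im|) * ‖b‖ := by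
        gcongr
        simpa only [abs_of_pos hl] using Complex.norm_le_abs_re_add_abs_im l
    _ ≤ (2 + 3 * (Real.pi * (N * 2 ^ N)) / β) * r := by linarith

variable {K : ℝ}

lemma norm_op_mul_inv_cube_le (hone : ‖(1 : B)‖ ≤ 1) (hκ : ∀ i, 0 ≤ κ i) (hK : 0 ≤ K) {l : ℂ}
    (hl : 0 < l.re) (hres : ∀ b : B, ‖l‖ * ‖b‖ ≤ K * ‖op (fun i => l + κ i) * b‖) :
    ‖op fun i => κ i * ((l + κ i) ^ 3)⁻¹‖ ≤ (1 + K) * K ^ 2 / ‖l‖ ^ 2 := by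
  have hl0 : 0 < ‖l‖ := hl.trans_le (Complex.re_le_norm l)
  have hne (i : ι) : l + κ i ≠ 0 := fun h0 => by
    have hre := congrArg Complex.re h0
    simp only [Complex.add_re, Complex.ofReal_re, Complex.zero_re] at hre
    linarith [hκ i]
  set R := op fun i => (l + κ i)⁻¹
  have hR : ‖l‖ * ‖R‖ ≤ K := by
    have hmul : op (fun i => l + κ i) * R = 1 := by
      rw [← map_mul, ← map_one op]
      congr 1
      funext i
      exact mul_inv_cancel₀ (hne i)
    exact (hres R).trans (by rw [hmul]; exact mul_le_of_le_one_right hK hone)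
  have hκR : ‖op fun i => κ i * (l + κ i)⁻¹‖ ≤ 1 + K := by
    have hfun : (fun i => κ i * (l + κ i)⁻¹ : ι → ℂ) = 1 - l • fun i => (l + κ i)⁻¹ := by
      funext i
      simp only [Pi.sub_apply, Pi.smul_apply, Pi.one_apply, smul_eq_mul]
      field_simp [hne i]
      ring
    rw [hfun, map_sub, map_smul, map_one]
    refine (norm_sub_le _ _).trans (add_le_add hone ?_)
    rwa [norm_smul]
  have hfactor : (fun i => κ i * ((l + κ i) ^ 3)⁻¹ : ι → ℂ)
      = (fun i => κ i * (l + κ i)⁻¹) * ((fun i => (l + κ i)⁻¹) * fun i => (l + κ i)⁻¹) := by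
    funext i
    simp only [Pi.mul_apply, ← inv_pow]
    ring
  rw [hfactor, map_mul, map_mul]
  calc ‖op (fun i => κ i * (l + κ i)⁻¹) * (R * R)‖
      ≤ (1 + K) * (K / ‖l‖ * (K / ‖l‖)) := by
        have hR' : ‖R‖ ≤ K / ‖l‖ := (le_div_iff₀' hl0).2 hR
        exact norm_mul_le_of_le hκR (norm_mul_le_of_le hR' hR')
    _ = (1 + K) * K ^ 2 / ‖l‖ ^ 2 := by ring

open MeasureTheory in
lemma norm_op_mul_exp_neg_le [Finite ι] (hone : ‖(1 : B)‖ ≤ 1) (hκ : ∀ i, 0 ≤ κ i) (hK : 0 ≤ K)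
    (hres : ∀ l : ℂ, 0 < l.re → ∀ b : B, ‖l‖ * ‖b‖ ≤ K * ‖op (fun i => l + κ i) * b‖) :
    ‖op fun i => κ i * Complex.exp (-κ i)‖
      ≤ 2 * Real.pi * Real.exp 1 * ((1 + K) * K ^ 2) := by
  cases nonempty_fintype ι
  let L : (ι → ℂ) →L[ℂ] B := LinearMap.toContinuousLinearMap op.toLinearMap
  let l (w : ℝ) : ℂ := 1 + 2 * Real.pi * w * Complex.I
  have hl (w : ℝ) : (l w).re = 1 := by simp [l]
  let φ (w : ℝ) : ι → ℂ :=
    (2 * Complex.exp (l w)) • fun i => κ i * ((l w + κ i) ^ 3)⁻¹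
  have hint (i : ι) : Integrable fun w => φ w i := integrable_exp_mul_mul_inv_cube (hκ i)
  have hval : (fun i => κ i * Complex.exp (-κ i) : ι → ℂ) = ∫ w, φ w := by
    funext i
    rw [eval_integral hint]
    exact (integral_exp_mul_mul_inv_cube (hκ i)).symm
  have hbound (w : ℝ) :
      ‖L (φ w)‖ ≤ 2 * Real.exp 1 * ((1 + K) * K ^ 2) * (1 + w ^ 2)⁻¹ := by
    have hpos : 0 < (l w).re := (hl w).symm ▸ one_pos
    have hle := norm_op_mul_inv_cube_le hone hκ hK hpos (hres (l w) hpos)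
    rw [map_smul, norm_smul, norm_mul, Complex.norm_two, Complex.norm_exp, hl, mul_assoc _ _ (_⁻¹)]
    refine mul_le_mul_of_nonneg_left (hle.trans ?_) (by positivity)
    rw [div_eq_mul_inv]
    gcongr
    simpa only [Complex.ofReal_one] using one_add_sq_le_norm_sq le_rfl w
  rw [hval]
  refine (norm_map_integral_le L (.of_eval hint) (integrable_inv_one_add_sq.const_mul _)
    hbound).trans_eq ?_
  rw [integral_const_mul, integral_univ_inv_one_add_sq]
  ring

lemma norm_op_mul_exp_neg_mul_le [Finite ι] (hone : ‖(1 : B)‖ ≤ 1) (hκ : ∀ i, 0 ≤ κ i)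
    (hK : 0 ≤ K)
    (hres : ∀ l : ℂ, 0 < l.re → ∀ b : B, ‖l‖ * ‖b‖ ≤ K * ‖op (fun i => l + κ i) * b‖)
    {t : ℝ} (ht : 0 < t) :
    ‖op fun i => κ i * Complex.exp (-(t * κ i))‖
      ≤ 2 * Real.pi * Real.exp 1 * ((1 + K) * K ^ 2) / t := by
  have hres' (l : ℂ) (hl : 0 < l.re) (b : B) :
      ‖l‖ * ‖b‖ ≤ K * ‖op (fun i => l + (t * κ i : ℝ)) * b‖ := by
    have hscale : (fun i => l + (t * κ i : ℝ) : ι → ℂ)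
        = (t : ℂ) • fun i => (t⁻¹ : ℝ) * l + κ i := by
      funext i
      rw [Pi.smul_apply, smul_eq_mul, mul_add, ← mul_assoc, ← Complex.ofReal_mul,
        mul_inv_cancel₀ ht.ne', Complex.ofReal_one, one_mul, Complex.ofReal_mul]
    have h := hres ((t⁻¹ : ℝ) * l) (by rw [Complex.re_ofReal_mul]; positivity) b
    rw [norm_mul, Complex.norm_real, Real.norm_of_nonneg (inv_nonneg.2 ht.le), mul_assoc,
      inv_mul_le_iff₀ ht] at h
    rw [hscale, map_smul, smul_mul_assoc, norm_smul, Complex.norm_real, Real.norm_of_nonneg ht.le]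
    linarith
  have h := norm_op_mul_exp_neg_le hone (fun i => mul_nonneg ht.le (hκ i)) hK hres'
  have hsmul : (fun i => (t * κ i : ℝ) * Complex.exp (-(t * κ i : ℝ)) : ι → ℂ)
      = (t : ℂ) • fun i => κ i * Complex.exp (-(t * κ i)) := by
    funext i
    simp only [Pi.smul_apply, smul_eq_mul, Complex.ofReal_mul]
    ring
  rw [hsmul, map_smul, norm_smul, Complex.norm_real, Real.norm_of_nonneg ht.le] at h
  rwa [le_div_iff₀' ht]

variable {C : ℝ}

lemma norm_op_pow_mul_exp_neg_mul_le
    (hC : ∀ t : ℝ, 0 < t → ‖op fun i => κ i * Complex.exp (-(t * κ i))‖ ≤ C / t) {t : ℝ}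
    (ht : 0 < t) {k : ℕ} (hk : 0 < k) :
    ‖op fun i => (κ i : ℂ) ^ k * Complex.exp (-(t * κ i))‖ ≤ (C * k / t) ^ k := by
  have hpow : (fun i => (κ i : ℂ) ^ k * Complex.exp (-(t * κ i)))
      = (fun i => κ i * Complex.exp (-((t / k : ℝ) * κ i))) ^ k := by
    funext i
    have hk0 : (k : ℂ) ≠ 0 := Nat.cast_ne_zero.2 hk.ne'
    rw [Pi.pow_apply, mul_pow, ← Complex.exp_nat_mul]
    congr 2
    push_cast
    field_simp
  rw [hpow, map_pow]
  refine (norm_pow_le' _ hk).trans ?_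
  gcongr
  exact (hC (t / k) (by positivity)).trans_eq (div_div_eq_mul_div _ _ _)

lemma hasSum_multiplierSemigroup [Finite ι] (z : ℂ) (t : ℝ) :
    HasSum (fun k : ℕ => ((-(z - t : ℂ)) ^ k / k.factorial : ℂ) •
      op fun i => (κ i : ℂ) ^ k * Complex.exp (-(t * κ i))) (multiplierSemigroup op κ z) := by
  cases nonempty_fintype ι
  have hsum : HasSum (fun k : ℕ => ((-(z - t : ℂ)) ^ k / k.factorial : ℂ) •
      fun i => (κ i : ℂ) ^ k * Complex.exp (-(t * κ i))) fun i => Complex.exp (-(z * κ i)) := by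
    refine Pi.hasSum.2 fun i => ?_
    have h := (NormedSpace.expSeries_div_hasSum_exp (-(z - t) * κ i)).mul_right
      (Complex.exp (-(t * κ i)))
    rw [← Complex.exp_eq_exp_ℂ, ← Complex.exp_add] at h
    have hexp : -(z * κ i) = -(z - t) * κ i + -(t * κ i) := by ring
    have hterm (k : ℕ) : (((-(z - t : ℂ)) ^ k / k.factorial : ℂ) •
        fun i => (κ i : ℂ) ^ k * Complex.exp (-(t * κ i))) i
        = (-(z - t) * κ i) ^ k / k.factorial * Complex.exp (-(t * κ i)) := by
      rw [Pi.smul_apply, smul_eq_mul, mul_pow]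
      ring
    simpa only [hexp, hterm] using h
  simpa only [multiplierSemigroup, map_smul, Function.comp_def, AlgHom.toLinearMap_apply,
    LinearMap.coe_toContinuousLinearMap'] using
    hsum.map _ (LinearMap.toContinuousLinearMap op.toLinearMap).continuous

lemma norm_multiplierSemigroup_le_two [Finite ι]
    (hT : ∀ t : ℝ, 0 ≤ t → ‖multiplierSemigroup op κ t‖ ≤ 1)
    (hC : ∀ t : ℝ, 0 < t → ‖op fun i => κ i * Complex.exp (-(t * κ i))‖ ≤ C / t)
    {δ : ℝ} (hδ : 0 ≤ δ) (hC0 : 0 ≤ C) (hδC : δ * C * Real.exp 1 ≤ 1 / 2) {z : ℂ}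
    (hz : z ∈ discSector δ) : ‖multiplierSemigroup op κ z‖ ≤ 2 := by
  obtain ⟨t, ht, hzt⟩ := hz
  rcases ht.eq_or_lt with rfl | ht
  · rw [mul_zero, norm_le_zero_iff, sub_eq_zero] at hzt
    rw [hzt]
    exact (hT 0 le_rfl).trans one_le_two
  rw [← (hasSum_multiplierSemigroup z t).tsum_eq]
  refine tsum_of_norm_bounded hasSum_geometric_two fun k => ?_
  rcases k.eq_zero_or_pos with rfl | hk
  · simpa [multiplierSemigroup] using hT t ht.le
  have hk' : (0 : ℝ) < k := Nat.cast_pos.2 hk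
  rw [norm_smul, norm_div, norm_pow, norm_neg, Complex.norm_natCast]
  calc ‖z - t‖ ^ k / k.factorial * ‖op fun i => (κ i : ℂ) ^ k * Complex.exp (-(t * κ i))‖
      ≤ (δ * t) ^ k / k.factorial * (C * k / t) ^ k := by
        gcongr
        exact norm_op_pow_mul_exp_neg_mul_le hC ht hk
    _ = (δ * C) ^ k * ((k : ℝ) ^ k / k.factorial) := by
        rw [div_pow, mul_pow, mul_pow, mul_pow]
        field_simp
    _ ≤ (δ * C) ^ k * Real.exp 1 ^ k := by
        rw [← Real.exp_nat_mul, mul_one]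
        gcongr
        exact Real.pow_div_factorial_le_exp k hk'.le k
    _ = (δ * C * Real.exp 1) ^ k := (mul_pow _ _ _).symm
    _ ≤ (1 / 2) ^ k := by gcongr

universe u v in
theorem BeurlingCondition.exists_discSector (N : ℕ) {β : ℝ} (hβ : 0 < β) :
    ∃ δ : ℝ, 0 < δ ∧ δ ≤ 1 ∧ ∀ (ι : Type u) [Finite ι] (B : Type v) [NormedRing B]
      [NormedAlgebra ℂ B] (op : (ι → ℂ) →ₐ[ℂ] B) (κ : ι → ℝ), (∀ i, 0 ≤ κ i) →
      BeurlingCondition op κ N β → ∀ z ∈ discSector δ, ‖multiplierSemigroup op κ z‖ ≤ 2 := by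
  set K : ℝ := 2 + 3 * (Real.pi * (N * 2 ^ N)) / β
  have hK : 0 ≤ K := by positivity
  set C : ℝ := 2 * Real.pi * Real.exp 1 * ((1 + K) * K ^ 2)
  have hC : 0 ≤ C := by positivity
  have hδ : 0 < (2 * Real.exp 1 * (C + 1))⁻¹ := by positivity
  refine ⟨(2 * Real.exp 1 * (C + 1))⁻¹, hδ, inv_le_one_of_one_le₀ ?_,
    fun ι _ B _ _ op κ hκ h z hz => norm_multiplierSemigroup_le_two h.norm_le_one (fun t ht =>
      norm_op_mul_exp_neg_mul_le h.norm_one_le hκ hK (fun l hl => h.norm_mul_norm_le hβ hl) ht)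
      hδ.le hC ?_ hz⟩
  · nlinarith [Real.add_one_le_exp 1]
  · rw [inv_mul_eq_div, div_mul_eq_mul_div, div_le_div_iff₀ (by positivity) two_pos]
    nlinarith [Real.exp_pos 1]

end Multipliers

section BeckConvexity

variable {ι : Type*} [Fintype ι]

/-- Beck's convexity condition: among the signed sums of `ι`-many vectors in the unit ball one is
shorter, by the factor `1 - δ`, than the triangle inequality predicts. A space which satisfies it
for some `ι` and `δ > 0` is called `B`-convex; it then does not contain `ℓ₁^ι` almost
isometrically. -/
def BeckConvex (Y : Type*) [NormedAddCommGroup Y] (ι : Type*) [Fintype ι] (δ : ℝ) : Prop :=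
  ∀ x : ι → Y, (∀ i, ‖x i‖ ≤ 1) → ∃ s : ι → ℤˣ, ‖∑ i, s i • x i‖ ≤ Fintype.card ι * (1 - δ)

variable {Y : Type*} [NormedAddCommGroup Y] {δ : ℝ}

lemma norm_units_smul (s : ℤˣ) (y : Y) : ‖s • y‖ = ‖y‖ := by
  rcases Int.units_eq_one_or s with rfl | rfl <;> simp [Units.smul_def]

lemma BeckConvex.le_one [Nonempty ι] (h : BeckConvex Y ι δ) : δ ≤ 1 := by
  obtain ⟨s, hs⟩ := h 0 fun i => by simp
  have hcard : (0 : ℝ) < Fintype.card ι := Nat.cast_pos.2 Fintype.card_pos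
  have hpos := (norm_nonneg _).trans hs
  linarith [nonneg_of_mul_nonneg_right hpos hcard]

lemma norm_rpow_toReal_piLp {Ω : Type*} [Fintype Ω] {p : ℝ≥0∞} (hp : 0 < p.toReal)
    (y : PiLp p fun _ : Ω => Y) : ‖y‖ ^ p.toReal = ∑ ω, ‖y ω‖ ^ p.toReal := by
  rw [PiLp.norm_eq_sum hp, ← Real.rpow_mul (Finset.sum_nonneg fun ω _ => by positivity),
    one_div_mul_cancel hp.ne', Real.rpow_one]

variable [NormedSpace ℝ Y]

lemma BeckConvex.exists_norm_sum_le_sub (h : BeckConvex Y ι δ) (x : ι → Y) {m : ℝ} (hm : 0 ≤ m)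
    (hmx : ∀ i, m ≤ ‖x i‖) :
    ∃ s : ι → ℤˣ, ‖∑ i, s i • x i‖ ≤ ∑ i, ‖x i‖ - Fintype.card ι * δ * m := by
  have hu (i : ι) : ‖‖x i‖⁻¹ • x i‖ ≤ 1 := by
    rw [norm_smul, norm_inv, norm_norm]
    exact inv_mul_le_one
  obtain ⟨s, hs⟩ := h (fun i => ‖x i‖⁻¹ • x i) hu
  refine ⟨s, ?_⟩
  have hsplit (i : ι) : s i • x i
      = m • (s i • ‖x i‖⁻¹ • x i) + (‖x i‖ - m) • (s i • ‖x i‖⁻¹ • x i) := by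
    rw [← add_smul, add_sub_cancel, smul_comm, ← smul_assoc ‖x i‖, smul_eq_mul]
    rcases eq_or_ne (x i) 0 with h0 | h0
    · simp [h0]
    · rw [mul_inv_cancel₀ (norm_ne_zero_iff.2 h0), one_smul]
  have hrest (i : ι) : ‖(‖x i‖ - m) • (s i • ‖x i‖⁻¹ • x i)‖ ≤ ‖x i‖ - m := by
    rw [norm_smul, Real.norm_of_nonneg (sub_nonneg.2 (hmx i)), norm_units_smul]
    exact mul_le_of_le_one_right (sub_nonneg.2 (hmx i)) (hu i)
  calc ‖∑ i, s i • x i‖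
      ≤ ‖m • ∑ i, s i • ‖x i‖⁻¹ • x i‖ + ∑ i, (‖x i‖ - m) := by
        rw [Finset.sum_congr rfl fun i _ => hsplit i, Finset.sum_add_distrib, ← Finset.smul_sum]
        exact (norm_add_le _ _).trans (by gcongr; exact norm_sum_le_of_le _ fun i _ => hrest i)
    _ ≤ m * (Fintype.card ι * (1 - δ)) + ∑ i, (‖x i‖ - m) := by
        rw [norm_smul, Real.norm_of_nonneg hm]
        gcongr
    _ = ∑ i, ‖x i‖ - Fintype.card ι * δ * m := by
        rw [Finset.sum_sub_distrib, Finset.sum_const, Finset.card_univ, nsmul_eq_mul]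
        ring

lemma BeckConvex.exists_norm_sum_le (h : BeckConvex Y ι δ) {y : ι → Y} {R : ℝ} (hR : 0 ≤ R)
    (hy : ∀ i, ‖y i‖ ≤ R) :
    ∃ s : ι → ℤˣ, ‖∑ i, s i • y i‖ ≤ Fintype.card ι * (1 - δ) * R := by
  obtain ⟨s, hs⟩ := h (fun i => R⁻¹ • y i) fun i => by
    rw [norm_smul, norm_inv, Real.norm_of_nonneg hR]
    exact inv_mul_le_one_of_le₀ (hy i) hR
  refine ⟨s, ?_⟩
  simp only [smul_comm _ R⁻¹, ← Finset.smul_sum] at hs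
  rcases hR.eq_or_lt with rfl | hR
  · have hy0 (i : ι) : y i = 0 := norm_le_zero_iff.1 (hy i)
    simp [hy0]
  · rwa [norm_smul, norm_inv, Real.norm_of_nonneg hR.le, inv_mul_le_iff₀ hR, mul_comm] at hs

lemma card_mul_norm_sum_le {κ : Type*} [Fintype κ] {u : κ → Y} {R : ℝ} (hu : ∀ k, ‖u k‖ ≤ R)
    (g : ι → κ) :
    Fintype.card ι * ‖∑ k, u k‖
      ≤ ‖∑ i, u (g i)‖ + Fintype.card ι * ((Fintype.card κ - 1) * R) := by
  classical
  have hrest (i : ι) : ‖∑ k ∈ Finset.univ.erase (g i), u k‖ ≤ (Fintype.card κ - 1) * R := by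
    refine (norm_sum_le_of_le _ fun k _ => hu k).trans_eq ?_
    rw [Finset.sum_const, Finset.card_erase_of_mem (Finset.mem_univ _), Finset.card_univ,
      nsmul_eq_mul, Nat.cast_pred (Fintype.card_pos_iff.2 ⟨g i⟩)]
  have hsplit : (Fintype.card ι : ℝ) • ∑ k, u k
      = ∑ i, u (g i) + ∑ i, ∑ k ∈ Finset.univ.erase (g i), u k := by
    rw [← Finset.sum_add_distrib]
    simp only [Finset.add_sum_erase _ _ (Finset.mem_univ _), Finset.sum_const, Finset.card_univ,
      Nat.cast_smul_eq_nsmul]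
  calc Fintype.card ι * ‖∑ k, u k‖ = ‖(Fintype.card ι : ℝ) • ∑ k, u k‖ := by
        rw [norm_smul, Real.norm_natCast]
    _ ≤ ‖∑ i, u (g i)‖ + ∑ _i : ι, (Fintype.card κ - 1) * R := by
        rw [hsplit]
        exact (norm_add_le _ _).trans
          (add_le_add le_rfl (norm_sum_le_of_le _ fun i _ => hrest i))
    _ = _ := by rw [Finset.sum_const, Finset.card_univ, nsmul_eq_mul]

-- Beck's argument: for the signs `s` furnished by `B`-convexity and `A = {i | s i = 1}`, the terms
-- at `A ∪ {i}` sum to `± P A (∑ i, s i • P {i} y)`.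
lemma norm_sum_alternating_le [Nonempty ι] [DecidableEq ι] (h : BeckConvex Y ι δ)
    (P : Finset ι → Y →+ Y) (hP : ∀ A y, ‖P A y‖ ≤ ‖y‖)
    (hmul : ∀ A B y, P (A ∪ B) y = P A (P B y)) (y : Y) :
    ‖∑ A, (-1 : ℤˣ) ^ A.card • P A y‖ ≤ (2 ^ Fintype.card ι - δ) * ‖y‖ := by
  obtain ⟨s, hs⟩ := h.exists_norm_sum_le (norm_nonneg y) fun i => hP {i} y
  set A := Finset.univ.filter fun i => s i = 1 with hA
  set u : Finset ι → Y := fun B => (-1 : ℤˣ) ^ B.card • P B y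
  have hu (B : Finset ι) : ‖u B‖ ≤ ‖y‖ := by
    rw [norm_units_smul]
    exact hP B y
  have hinsert (i : ι) : u (insert i A) = (-1 : ℤˣ) ^ A.card • P A (s i • P {i} y) := by
    have hPi : P (insert i A) y = P A (P {i} y) := by
      rw [← hmul, Finset.union_comm, Finset.insert_eq]
    simp only [u, hPi]
    rcases Int.units_eq_one_or (s i) with hi | hi
    · rw [Finset.insert_eq_of_mem (by simp [hA, hi]), hi, one_smul]
    · have hnot : i ∉ A := by simp [hA, hi]
      rw [Finset.card_insert_of_notMem hnot, hi, pow_succ, mul_smul, Units.neg_smul, one_smul,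
        Units.neg_smul, one_smul, map_neg]
  have hins : ‖∑ i, u (insert i A)‖ ≤ Fintype.card ι * (1 - δ) * ‖y‖ := by
    simp only [hinsert, ← Finset.smul_sum, ← map_sum, norm_units_smul]
    exact (hP A _).trans hs
  have hcard : (0 : ℝ) < Fintype.card ι := Nat.cast_pos.2 Fintype.card_pos
  have htotal := card_mul_norm_sum_le hu fun i => insert i A
  rw [Fintype.card_finset, Nat.cast_pow, Nat.cast_two] at htotal
  refine le_of_mul_le_mul_left ?_ hcard
  linarith

section PiLp

variable {p : ℝ}

lemma prod_le_of_mem_stdSimplex {a : ι → ℝ} (ha : a ∈ stdSimplex ℝ ι) (i : ι) :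
    ∏ j, a j ≤ a i := by
  classical
  rw [← Finset.mul_prod_erase _ _ (Finset.mem_univ i)]
  refine mul_le_of_le_one_right (ha.1 i) (Finset.prod_le_one (fun j _ => ha.1 j) fun j _ => ?_)
  exact (Finset.single_le_sum (fun k _ => ha.1 k) (Finset.mem_univ j)).trans_eq ha.2

lemma card_mul_mul_prod_le_one {a : ι → ℝ} (ha : a ∈ stdSimplex ℝ ι) (hδ1 : δ ≤ 1) :
    Fintype.card ι * δ * ∏ i, a i ≤ 1 := by
  calc Fintype.card ι * δ * ∏ i, a i ≤ ∑ _i : ι, ∏ i, a i := by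
        rw [Finset.sum_const, Finset.card_univ, nsmul_eq_mul]
        have hprod : 0 ≤ ∏ i, a i := Finset.prod_nonneg fun i _ => ha.1 i
        gcongr
        exact mul_le_of_le_one_right (Nat.cast_nonneg _) hδ1
    _ ≤ ∑ i, a i := Finset.sum_le_sum fun i _ => prod_le_of_mem_stdSimplex ha i
    _ = 1 := ha.2

lemma sum_rpow_pos_of_mem_stdSimplex {a : ι → ℝ} (ha : a ∈ stdSimplex ℝ ι) :
    0 < ∑ i, a i ^ p := by
  have hne : ∃ i, a i ≠ 0 := by
    by_contra! h0
    simpa [h0] using ha.2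
  obtain ⟨i, hi⟩ := hne
  exact Finset.sum_pos' (fun j _ => Real.rpow_nonneg (ha.1 j) p)
    ⟨i, Finset.mem_univ i, Real.rpow_pos_of_pos (lt_of_le_of_ne (ha.1 i) hi.symm) p⟩

-- If the product vanishes then the strict gain is in Jensen's inequality, for the remaining
-- coordinates.
lemma one_sub_mul_prod_rpow_lt [Nonempty ι] {a : ι → ℝ} (ha : a ∈ stdSimplex ℝ ι) (hp : 1 < p)
    (hδ : 0 < δ) (hδ1 : δ ≤ 1) :
    2 ^ Fintype.card ι - 1 + (1 - Fintype.card ι * δ * ∏ i, a i) ^ p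
      < 2 ^ Fintype.card ι * (Fintype.card ι ^ (p - 1) * ∑ i, a i ^ p) := by
  classical
  have htwo : (1 : ℝ) ≤ 2 ^ Fintype.card ι := one_le_pow₀ one_le_two
  have hbase := card_mul_mul_prod_le_one ha hδ1
  have hprod : 0 ≤ ∏ i, a i := Finset.prod_nonneg fun i _ => ha.1 i
  rcases hprod.eq_or_lt with h0 | hpos
  · obtain ⟨i, hi, hai⟩ := Finset.prod_eq_zero_iff.1 h0.symm
    have hjensen : 1 < (Fintype.card ι : ℝ) ^ (p - 1) * ∑ i, a i ^ p := by
      have hle := Real.rpow_sum_le_const_mul_sum_rpow_of_nonneg (Finset.univ.erase i) hp.le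
        fun j _ => ha.1 j
      have hai' : a i ^ p = 0 := by rw [hai, Real.zero_rpow (by linarith)]
      rw [Finset.sum_erase _ hai, ha.2, Real.one_rpow,
        Finset.sum_erase (f := fun i => a i ^ p) _ hai'] at hle
      refine hle.trans_lt (mul_lt_mul_of_pos_right ?_ (sum_rpow_pos_of_mem_stdSimplex ha))
      refine Real.rpow_lt_rpow (Nat.cast_nonneg _) (Nat.cast_lt.2 ?_) (by linarith)
      exact Finset.card_erase_lt_of_mem hi
    rw [← h0, mul_zero, sub_zero, Real.one_rpow, sub_add_cancel]
    exact lt_mul_of_one_lt_right (by positivity) hjensen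
  · have hjensen : 1 ≤ (Fintype.card ι : ℝ) ^ (p - 1) * ∑ i, a i ^ p := by
      have hle := Real.rpow_sum_le_const_mul_sum_rpow_of_nonneg Finset.univ hp.le
        fun j _ => ha.1 j
      rwa [ha.2, Real.one_rpow, Finset.card_univ] at hle
    have hlt : (1 - Fintype.card ι * δ * ∏ i, a i) ^ p < 1 := by
      refine Real.rpow_lt_one (sub_nonneg.2 hbase) (sub_lt_self 1 ?_) (by linarith)
      positivity
    nlinarith

lemma exists_one_sub_mul_prod_rpow_le [Nonempty ι] (hp : 1 < p) (hδ : 0 < δ) (hδ1 : δ ≤ 1) :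
    ∃ c : ℝ, 0 ≤ c ∧ c < 1 ∧ ∀ a ∈ stdSimplex ℝ ι,
      2 ^ Fintype.card ι - 1 + (1 - Fintype.card ι * δ * ∏ i, a i) ^ p
        ≤ c * (2 ^ Fintype.card ι * (Fintype.card ι ^ (p - 1) * ∑ i, a i ^ p)) := by
  classical
  let num (a : ι → ℝ) : ℝ :=
    2 ^ Fintype.card ι - 1 + (1 - Fintype.card ι * δ * ∏ i, a i) ^ p
  let den (a : ι → ℝ) : ℝ := 2 ^ Fintype.card ι * (Fintype.card ι ^ (p - 1) * ∑ i, a i ^ p)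
  have hden {a : ι → ℝ} (ha : a ∈ stdSimplex ℝ ι) : 0 < den a := by
    have hsum := sum_rpow_pos_of_mem_stdSimplex (p := p) ha
    positivity
  have hcont : ContinuousOn (fun a => num a / den a) (stdSimplex ℝ ι) := by
    refine ContinuousOn.div ?_ ?_ fun a ha => (hden ha).ne'
    · exact (continuous_const.add (Continuous.rpow_const (by fun_prop)
        fun _ => .inr (by linarith))).continuousOn
    · exact (continuous_const.mul (continuous_const.mul (continuous_finsetSum _ fun i _ =>
        (continuous_apply i).rpow_const fun _ => .inr (by linarith)))).continuousOn
  obtain ⟨a, ha, hmax⟩ := (isCompact_stdSimplex ℝ ι).exists_isMaxOn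
    ⟨_, single_mem_stdSimplex ℝ (Classical.arbitrary ι)⟩ hcont
  refine ⟨num a / den a, div_nonneg ?_ (hden ha).le, (div_lt_one (hden ha)).2
    (one_sub_mul_prod_rpow_lt ha hp hδ hδ1), fun b hb => (div_le_iff₀ (hden hb)).1 (hmax hb)⟩
  exact add_nonneg (sub_nonneg.2 (one_le_pow₀ one_le_two))
    (Real.rpow_nonneg (sub_nonneg.2 (card_mul_mul_prod_le_one ha hδ1)) _)

lemma BeckConvex.sum_norm_rpow_le [DecidableEq ι] (h : BeckConvex Y ι δ) (hp : 0 ≤ p) {x : ι → Y}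
    (hx : (fun i => ‖x i‖) ∈ stdSimplex ℝ ι) :
    ∑ s : ι → ℤˣ, ‖∑ i, s i • x i‖ ^ p
      ≤ 2 ^ Fintype.card ι - 1 + (1 - Fintype.card ι * δ * ∏ i, ‖x i‖) ^ p := by
  obtain ⟨s₀, hs₀⟩ := h.exists_norm_sum_le_sub x (Finset.prod_nonneg fun i _ => norm_nonneg (x i))
    (prod_le_of_mem_stdSimplex hx)
  rw [hx.2] at hs₀
  have hone (s : ι → ℤˣ) : ‖∑ i, s i • x i‖ ^ p ≤ 1 := by
    refine Real.rpow_le_one (norm_nonneg _) ((norm_sum_le _ _).trans_eq ?_) hp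
    simp only [norm_units_smul, hx.2]
  rw [← Finset.sum_erase_add _ _ (Finset.mem_univ s₀)]
  refine add_le_add ((Finset.sum_le_sum fun s _ => hone s).trans_eq ?_)
    (Real.rpow_le_rpow (norm_nonneg _) hs₀ hp)
  rw [Finset.sum_const, Finset.card_erase_of_mem (Finset.mem_univ _), Finset.card_univ,
    Fintype.card_fun, Fintype.card_units_int, nsmul_one, Nat.cast_pred (by positivity),
    Nat.cast_pow, Nat.cast_two]

lemma BeckConvex.exists_sum_norm_rpow_le [DecidableEq ι] [Nonempty ι] (h : BeckConvex Y ι δ)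
    (hδ : 0 < δ) (hp : 1 < p) :
    ∃ c : ℝ, 0 ≤ c ∧ c < 1 ∧ ∀ x : ι → Y, ∑ s : ι → ℤˣ, ‖∑ i, s i • x i‖ ^ p
      ≤ c * (2 ^ Fintype.card ι * (Fintype.card ι ^ (p - 1) * ∑ i, ‖x i‖ ^ p)) := by
  obtain ⟨c, hc0, hc1, hc⟩ := exists_one_sub_mul_prod_rpow_le (ι := ι) hp hδ h.le_one
  refine ⟨c, hc0, hc1, fun x => ?_⟩
  have hR : 0 ≤ ∑ i, ‖x i‖ := Finset.sum_nonneg fun i _ => norm_nonneg _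
  rcases hR.eq_or_lt with h0 | hR
  · have hx (i : ι) : x i = 0 := by
      rw [eq_comm, Finset.sum_eq_zero_iff_of_nonneg fun i _ => norm_nonneg _] at h0
      exact norm_eq_zero.1 (h0 i (Finset.mem_univ i))
    simp [hx, Real.zero_rpow (by linarith : p ≠ 0)]
  set R := ∑ i, ‖x i‖
  have hnorm (y : Y) : ‖R⁻¹ • y‖ = R⁻¹ * ‖y‖ := by
    rw [norm_smul, norm_inv, Real.norm_of_nonneg hR.le]
  have hscale (y : Y) : ‖R⁻¹ • y‖ ^ p = R⁻¹ ^ p * ‖y‖ ^ p := by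
    rw [hnorm, Real.mul_rpow (inv_nonneg.2 hR.le) (norm_nonneg _)]
  have hmem : (fun i => ‖R⁻¹ • x i‖) ∈ stdSimplex ℝ ι := by
    refine ⟨fun i => norm_nonneg _, ?_⟩
    simp only [hnorm, ← Finset.mul_sum]
    exact inv_mul_cancel₀ hR.ne'
  have hle := (h.sum_norm_rpow_le (by linarith) hmem).trans (hc _ hmem)
  simp only [smul_comm _ R⁻¹, ← Finset.smul_sum, hscale, ← Finset.mul_sum] at hle
  have hpos : 0 < R⁻¹ ^ p := Real.rpow_pos_of_pos (inv_pos.2 hR) p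
  refine le_of_mul_le_mul_left (hle.trans_eq ?_) hpos
  ring

end PiLp

universe u in
theorem BeckConvex.exists_piLp [Nonempty ι] (h : BeckConvex Y ι δ) (hδ : 0 < δ) {p : ℝ≥0∞}
    [Fact (1 ≤ p)] (hp : 1 < p.toReal) :
    ∃ δ' : ℝ, 0 < δ' ∧ ∀ (Ω : Type u) [Fintype Ω], BeckConvex (PiLp p fun _ : Ω => Y) ι δ' := by
  classical
  have hp0 : 0 < p.toReal := one_pos.trans hp
  obtain ⟨c, hc0, hc1, hc⟩ := h.exists_sum_norm_rpow_le hδ hp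
  refine ⟨1 - c ^ (1 / p.toReal), sub_pos.2 (Real.rpow_lt_one hc0 hc1 (by positivity)),
    fun Ω _ y hy => ?_⟩
  have hcard : (0 : ℝ) < Fintype.card ι := Nat.cast_pos.2 Fintype.card_pos
  have happly (s : ι → ℤˣ) (ω : Ω) : (∑ i, s i • y i) ω = ∑ i, s i • y i ω := by
    simp only [Units.smul_def, WithLp.ofLp_sum, WithLp.ofLp_smul, Finset.sum_apply, Pi.smul_apply]
  have hsum : ∑ s : ι → ℤˣ, ‖∑ i, s i • y i‖ ^ p.toReal
      ≤ ∑ _s : ι → ℤˣ, c * (Fintype.card ι : ℝ) ^ p.toReal := by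
    calc ∑ s : ι → ℤˣ, ‖∑ i, s i • y i‖ ^ p.toReal
        = ∑ ω, ∑ s : ι → ℤˣ, ‖∑ i, s i • y i ω‖ ^ p.toReal := by
          simp only [norm_rpow_toReal_piLp hp0, happly]
          exact Finset.sum_comm
      _ ≤ ∑ ω, c * (2 ^ Fintype.card ι * (Fintype.card ι ^ (p.toReal - 1) *
            ∑ i, ‖y i ω‖ ^ p.toReal)) := Finset.sum_le_sum fun ω _ => hc fun i => y i ω
      _ = c * (2 ^ Fintype.card ι * (Fintype.card ι ^ (p.toReal - 1) *
            ∑ i, ‖y i‖ ^ p.toReal)) := by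
          simp only [← Finset.mul_sum, norm_rpow_toReal_piLp hp0]
          rw [Finset.sum_comm]
      _ ≤ c * (2 ^ Fintype.card ι * (Fintype.card ι ^ (p.toReal - 1) * ∑ _i : ι, 1)) := by
          gcongr with i
          exact Real.rpow_le_one (norm_nonneg _) (hy i) hp0.le
      _ = ∑ _s : ι → ℤˣ, c * (Fintype.card ι : ℝ) ^ p.toReal := by
          simp only [Finset.sum_const, Finset.card_univ, Fintype.card_fun, Fintype.card_units_int,
            nsmul_eq_mul, mul_one, Real.rpow_sub_one hcard.ne']
          push_cast
          field_simp
  obtain ⟨s, -, hs⟩ := Finset.exists_le_of_sum_le Finset.univ_nonempty hsum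
  refine ⟨s, ?_⟩
  rw [sub_sub_cancel]
  refine (Real.rpow_le_rpow_iff (norm_nonneg _) (by positivity) hp0).1 (hs.trans_eq ?_)
  rw [Real.mul_rpow hcard.le (by positivity), ← Real.rpow_mul hc0, one_div_mul_cancel hp0.ne',
    Real.rpow_one, mul_comm]

end BeckConvexity

section Khintchine

variable {m : ℕ}

lemma sgn_sq (b : Bool) : sgn b ^ 2 = 1 := by
  cases b <;> simp [sgn]

lemma abs_sgn (b : Bool) : |sgn b| = 1 := by
  cases b <;> simp [sgn]

lemma sum_comp_sum_sgn_succ {G : Type*} [AddCommMonoid G] (F : ℝ → G) (a : Fin (m + 1) → ℝ) :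
    ∑ ε : Fin (m + 1) → Bool, F (∑ i, sgn (ε i) * a i)
      = ∑ ε : Fin m → Bool, (F (a 0 + ∑ i, sgn (ε i) * a i.succ)
          + F (-a 0 + ∑ i, sgn (ε i) * a i.succ)) := by
  rw [← (Fin.consEquiv fun _ : Fin (m + 1) => Bool).sum_comp, Fintype.sum_prod_type]
  simp [Fin.consEquiv, Fin.sum_univ_succ, Finset.sum_add_distrib, sgn]

lemma sum_sum_sgn_sq (a : Fin m → ℝ) :
    ∑ ε : Fin m → Bool, (∑ i, sgn (ε i) * a i) ^ 2 = 2 ^ m * ∑ i, a i ^ 2 := by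
  induction m with
  | zero => simp
  | succ m ih =>
    have hpair (S : ℝ) : (a 0 + S) ^ 2 + (-a 0 + S) ^ 2 = 2 * S ^ 2 + 2 * a 0 ^ 2 := by ring
    rw [sum_comp_sum_sgn_succ (· ^ 2)]
    simp only [hpair, Finset.sum_add_distrib, ← Finset.mul_sum, ih,
      Finset.sum_const, Finset.card_univ, Fintype.card_fun, Fintype.card_bool, Fintype.card_fin,
      nsmul_eq_mul]
    rw [Fin.sum_univ_succ]
    push_cast
    ring

lemma sum_sum_sgn_pow_four_le (a : Fin m → ℝ) :
    ∑ ε : Fin m → Bool, (∑ i, sgn (ε i) * a i) ^ 4 ≤ 3 * 2 ^ m * (∑ i, a i ^ 2) ^ 2 := by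
  induction m with
  | zero => simp
  | succ m ih =>
    have hpair (S : ℝ) : (a 0 + S) ^ 4 + (-a 0 + S) ^ 4
        = 2 * S ^ 4 + 12 * a 0 ^ 2 * S ^ 2 + 2 * a 0 ^ 4 := by ring
    rw [sum_comp_sum_sgn_succ (· ^ 4)]
    simp only [hpair, Finset.sum_add_distrib, ← Finset.mul_sum, sum_sum_sgn_sq,
      Finset.sum_const, Finset.card_univ, Fintype.card_fun, Fintype.card_bool, Fintype.card_fin,
      nsmul_eq_mul]
    rw [Fin.sum_univ_succ]
    push_cast
    have h0 : 0 ≤ (2 : ℝ) ^ m * a 0 ^ 4 := by positivity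
    rw [pow_succ (2 : ℝ) m]
    nlinarith [ih fun i => a i.succ]

-- Follows by averaging the quartic inequality `4 σ² s² - s⁴ ≤ 4 σ³ |s|`.
lemma mul_sqrt_sum_sq_le_sum_abs_sum_sgn (a : Fin m → ℝ) :
    2 ^ m * (√(∑ i, a i ^ 2) / 4) ≤ ∑ ε : Fin m → Bool, |∑ i, sgn (ε i) * a i| := by
  have hsq : √(∑ i, a i ^ 2) ^ 2 = ∑ i, a i ^ 2 :=
    Real.sq_sqrt (Finset.sum_nonneg fun i _ => sq_nonneg (a i))
  have hσ : 0 ≤ √(∑ i, a i ^ 2) := Real.sqrt_nonneg _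
  set σ := √(∑ i, a i ^ 2)
  rcases hσ.eq_or_lt with h0 | hσ
  · rw [← h0, zero_div, mul_zero]
    positivity
  have hquartic (s : ℝ) : 4 * σ ^ 2 * s ^ 2 - s ^ 4 ≤ 4 * σ ^ 3 * |s| := by
    have hcubic : 0 ≤ |s| ^ 3 - 4 * σ ^ 2 * |s| + 4 * σ ^ 3 := by
      have hfactor : 0 ≤ (|s| - 6 / 5 * σ) ^ 2 * (|s| + 12 / 5 * σ) := by positivity
      have hmixed : 0 ≤ σ ^ 2 * |s| := by positivity
      nlinarith [pow_pos hσ 3]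
    have h4 : s ^ 4 = |s| * |s| ^ 3 := by
      rw [← pow_succ', (by norm_num : Even (3 + 1)).pow_abs]
    rw [h4, ← sq_abs s]
    nlinarith [mul_nonneg (abs_nonneg s) hcubic]
  have hsum := Finset.sum_le_sum fun (ε : Fin m → Bool) (_ : ε ∈ Finset.univ) =>
    hquartic (∑ i, sgn (ε i) * a i)
  rw [Finset.sum_sub_distrib, ← Finset.mul_sum, ← Finset.mul_sum, sum_sum_sgn_sq, ← hsq] at hsum
  have hfour := sum_sum_sgn_pow_four_le a
  rw [← hsq] at hfour
  refine le_of_mul_le_mul_left ?_ (by positivity : 0 < 4 * σ ^ 3)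
  linarith

end Khintchine

section KConvexity

variable {n : ℕ} {Y Z : Type*} [NormedAddCommGroup Y] [NormedAddCommGroup Z] {q : ℝ}

lemma lpNorm_mono {f : (Fin n → Bool) → Y} {g : (Fin n → Bool) → Z} (hq : 0 ≤ q)
    (h : ∀ ε, ‖f ε‖ ≤ ‖g ε‖) : lpNorm q f ≤ lpNorm q g := by
  unfold lpNorm
  gcongr with ε
  exact h ε

lemma lpNorm_const (hq : q ≠ 0) (y : Y) : lpNorm (n := n) q (fun _ => y) = ‖y‖ := by
  have hcard : ((2 : ℝ) ^ n)⁻¹ * ((2 : ℝ) ^ n * ‖y‖ ^ q) = ‖y‖ ^ q :=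
    inv_mul_cancel_left₀ (by positivity) _
  rw [lpNorm, Finset.sum_const, Finset.card_univ, Fintype.card_fun, Fintype.card_bool,
    Fintype.card_fin, nsmul_eq_mul, Nat.cast_pow, Nat.cast_two, hcard,
    ← Real.rpow_mul (norm_nonneg y), mul_one_div_cancel hq, Real.rpow_one]

lemma sum_abs_sub_le_norm_sum_smul {ι : Type*} [Fintype ι] [NormedSpace ℝ Y] {δ R : ℝ} {x : ι → Y}
    (hx : ∀ i, ‖x i‖ ≤ 1)
    (hs : ∀ s : ι → ℤˣ, Fintype.card ι * (1 - δ) ≤ ‖∑ i, s i • x i‖) {a : ι → ℝ} (hR : 0 ≤ R)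
    (ha : ∀ i, |a i| ≤ R) :
    ∑ i, |a i| - Fintype.card ι * R * δ ≤ ‖∑ i, a i • x i‖ := by
  let s (i : ι) : ℤˣ := if 0 ≤ a i then 1 else -1
  have hcoef (i : ι) : |R * (s i : ℤ) - a i| = R - |a i| := by
    have hai := abs_le.1 (ha i)
    by_cases h : 0 ≤ a i
    · rw [abs_of_nonneg h]
      simp only [s, if_pos h, Units.val_one, Int.cast_one, mul_one]
      exact abs_of_nonneg (by linarith)
    · rw [abs_of_neg (not_le.1 h)]
      simp only [s, if_neg h, Units.val_neg, Units.val_one, Int.cast_neg, Int.cast_one, mul_neg,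
        mul_one]
      rw [abs_of_nonpos (by linarith)]
      ring
  have hsplit : R • ∑ i, s i • x i = ∑ i, a i • x i + ∑ i, (R * (s i : ℤ) - a i) • x i := by
    rw [Finset.smul_sum, ← Finset.sum_add_distrib]
    refine Finset.sum_congr rfl fun i _ => ?_
    rw [← add_smul, add_sub_cancel, mul_smul, Int.cast_smul_eq_zsmul, Units.smul_def]
  have hrest : ‖∑ i, (R * (s i : ℤ) - a i) • x i‖ ≤ ∑ i, (R - |a i|) := by
    refine norm_sum_le_of_le _ fun i _ => ?_
    rw [norm_smul, Real.norm_eq_abs, hcoef]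
    exact mul_le_of_le_one_right (sub_nonneg.2 (ha i)) (hx i)
  have htotal := norm_add_le (∑ i, a i • x i) (∑ i, (R * (s i : ℤ) - a i) • x i)
  rw [← hsplit, norm_smul, Real.norm_of_nonneg hR] at htotal
  rw [Finset.sum_sub_distrib, Finset.sum_const, Finset.card_univ, nsmul_eq_mul] at hrest
  nlinarith [mul_le_mul_of_nonneg_left (hs s) hR]

lemma Rad_eq_sum (f : (Fin n → Bool) → X) (ε : Fin n → Bool) :
    Rad f ε = (2 ^ n : ℝ)⁻¹ • ∑ δ, (∑ i, sgn (δ i) * sgn (ε i)) • f δ := by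
  simp only [Rad, coeff, walsh, Finset.prod_singleton, smul_comm _ (2 ^ n : ℝ)⁻¹,
    ← Finset.smul_sum, Finset.sum_smul, mul_smul]
  congr 1
  simp only [Finset.smul_sum]
  rw [Finset.sum_comm]
  refine Finset.sum_congr rfl fun δ _ => Finset.sum_congr rfl fun i _ => smul_comm _ _ _

lemma sqrt_div_four_sub_le_norm_Rad {f : (Fin n → Bool) → X} {δ : ℝ} (hf : ∀ ε, ‖f ε‖ ≤ 1)
    (hs : ∀ s : (Fin n → Bool) → ℤˣ,
      Fintype.card (Fin n → Bool) * (1 - δ) ≤ ‖∑ ε, s ε • f ε‖) (ε : Fin n → Bool) :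
    √n / 4 - n * δ ≤ ‖Rad f ε‖ := by
  have hkhintchine := mul_sqrt_sum_sq_le_sum_abs_sum_sgn fun i => sgn (ε i)
  have hcoef (ω : Fin n → Bool) : |∑ i, sgn (ω i) * sgn (ε i)| ≤ n := by
    refine (Finset.abs_sum_le_sum_abs _ _).trans_eq ?_
    simp only [abs_mul, abs_sgn, mul_one, Finset.sum_const, Finset.card_univ, Fintype.card_fin,
      nsmul_eq_mul]
  have hnorm := sum_abs_sub_le_norm_sum_smul hf hs n.cast_nonneg hcoef
  simp only [sgn_sq, Finset.sum_const, Finset.card_univ, Fintype.card_fin, nsmul_eq_mul,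
    mul_one] at hkhintchine
  rw [Fintype.card_fun, Fintype.card_bool, Fintype.card_fin, Nat.cast_pow, Nat.cast_two] at hnorm
  rw [Rad_eq_sum, norm_smul, norm_inv, Real.norm_of_nonneg (by positivity),
    le_inv_mul_iff₀ (by positivity)]
  linarith

theorem KConvex.exists_beckConvex (hX : KConvex X) :
    ∃ (m : ℕ) (δ : ℝ), 0 < δ ∧ BeckConvex X (Fin m → Bool) δ := by
  obtain ⟨q, hq, M, hM⟩ := hX
  have hq0 : 0 < q := one_pos.trans hq
  obtain ⟨k, hk⟩ := exists_nat_gt (8 * max M 0)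
  have hk0 : (0 : ℝ) < k := lt_of_le_of_lt (by positivity) hk
  refine ⟨k ^ 2, 1 / (8 * k), by positivity, ?_⟩
  by_contra hcon
  simp only [BeckConvex, not_forall, not_exists, not_le] at hcon
  obtain ⟨f, hf, hs⟩ := hcon
  have hRad (ε) : ‖(k / 8 : ℝ)‖ ≤ ‖Rad f ε‖ := by
    have h := sqrt_div_four_sub_le_norm_Rad hf (fun s => (hs s).le) ε
    rw [Nat.cast_pow, Real.sqrt_sq hk0.le] at h
    rw [Real.norm_of_nonneg (by positivity)]
    refine le_of_eq_of_le ?_ h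
    field_simp
    norm_num
  have hlower := lpNorm_mono hq0.le hRad
  have hupper := lpNorm_mono (g := fun _ => (1 : ℝ)) hq0.le fun ε => (hf ε).trans_eq norm_one.symm
  rw [lpNorm_const hq0.ne', Real.norm_of_nonneg (by positivity)] at hlower
  rw [lpNorm_const hq0.ne', norm_one] at hupper
  have hnonneg : 0 ≤ lpNorm q f := by unfold lpNorm; positivity
  have hMf : M * lpNorm q f ≤ max M 0 * 1 :=
    mul_le_mul (le_max_left _ _) hupper hnonneg (le_max_right _ _)
  linarith [hM _ f]

end KConvexity

section WalshMultipliers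

variable {n : ℕ}

lemma sum_walsh_mul_walsh (ε δ : Fin n → Bool) :
    ∑ A, walsh A ε * walsh A δ = if ε = δ then 2 ^ n else 0 := by
  simp only [walsh, ← Finset.prod_mul_distrib]
  rw [← Finset.powerset_univ, ← Finset.prod_one_add]
  split_ifs with h
  · subst h
    simp only [← pow_two, sgn_sq, one_add_one_eq_two, Finset.prod_const, Finset.card_univ,
      Fintype.card_fin]
  · obtain ⟨i, hi⟩ := Function.ne_iff.1 h
    refine Finset.prod_eq_zero (Finset.mem_univ i) ?_
    revert hi
    cases ε i <;> cases δ i <;> simp [sgn]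

-- The Walsh matrix is square, so the orthogonality of its rows gives that of its columns.
lemma sum_walsh_mul_walsh_points (A B : Finset (Fin n)) :
    ∑ ε, walsh A ε * walsh B ε = if A = B then 2 ^ n else 0 := by
  let W : Matrix (Fin n → Bool) (Finset (Fin n)) ℝ := Matrix.of fun ε A => walsh A ε
  have hrow : W * ((2 ^ n : ℝ)⁻¹ • W.transpose) = 1 := by
    ext ε δ
    rw [Matrix.mul_smul, Matrix.smul_apply, Matrix.mul_apply, Matrix.one_apply]
    simp only [W, Matrix.transpose_apply, Matrix.of_apply, sum_walsh_mul_walsh, smul_eq_mul,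
      mul_ite, mul_zero, inv_mul_cancel₀ (pow_ne_zero n (two_ne_zero (α := ℝ)))]
  have hcol := congrFun₂ ((Matrix.mul_eq_one_comm_of_card_eq _ _ _ (by simp)).1 hrow) A B
  rw [Matrix.smul_mul, Matrix.smul_apply, Matrix.mul_apply, Matrix.one_apply, smul_eq_mul,
    inv_mul_eq_iff_eq_mul₀ (by positivity), mul_ite, mul_one, mul_zero] at hcol
  exact hcol

lemma sum_walsh_smul_coeff (f : (Fin n → Bool) → X) (ε : Fin n → Bool) :
    ∑ A, walsh A ε • coeff f A = f ε := by
  have hcomm (A : Finset (Fin n)) : walsh A ε • coeff f A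
      = (2 ^ n : ℝ)⁻¹ • ∑ δ, (walsh A ε * walsh A δ) • f δ := by
    simp only [coeff, smul_comm (walsh A ε), Finset.smul_sum, mul_smul]
  simp only [hcomm]
  rw [← Finset.smul_sum, Finset.sum_comm]
  simp only [← Finset.sum_smul, sum_walsh_mul_walsh, ite_smul, zero_smul, Finset.sum_ite_eq,
    Finset.mem_univ, if_true]
  exact inv_smul_smul₀ (by positivity) _

lemma coeff_walsh_smul (A B : Finset (Fin n)) (x : X) :
    coeff (fun ε => walsh A ε • x) B = if A = B then x else 0 := by
  have hcomm (ε) : walsh B ε • walsh A ε • x = (walsh A ε * walsh B ε) • x := by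
    rw [smul_smul, mul_comm]
  simp only [coeff, hcomm]
  rw [← Finset.sum_smul, sum_walsh_mul_walsh_points, ite_smul, zero_smul, smul_ite, smul_zero,
    inv_smul_smul₀ (by positivity)]

variable {p : ℝ≥0∞}

variable (X p) in
/-- The projection `f ↦ f̂(A) w_A` of `L_p({-1,1}^n; X)` onto its `A`-th Walsh component. The
unnormalised space `PiLp p` is used, as the factor `2⁻ⁿ` does not affect operator norms. -/
def walshProj (A : Finset (Fin n)) :
    PiLp p (fun _ : Fin n → Bool => X) →L[ℂ] PiLp p fun _ : Fin n → Bool => X :=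
  (PiLp.continuousLinearEquiv p ℂ fun _ : Fin n → Bool => X).symm.toContinuousLinearMap ∘L
    ContinuousLinearMap.pi fun ε =>
      walsh A ε • (2 ^ n : ℝ)⁻¹ • ∑ δ, walsh A δ • PiLp.proj p (fun _ : Fin n → Bool => X) δ

lemma walshProj_apply (A : Finset (Fin n)) (f : PiLp p fun _ : Fin n → Bool => X) :
    walshProj X p A f = WithLp.toLp p fun ε => walsh A ε • coeff f.ofLp A := by
  refine PiLp.ext fun ε => ?_
  simp [walshProj, coeff]

variable [Fact (1 ≤ p)]

lemma completeOrthogonalIdempotents_walshProj :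
    CompleteOrthogonalIdempotents (walshProj X p (n := n)) := by
  have hmul (A B : Finset (Fin n)) :
      walshProj X p A * walshProj X p B = if A = B then walshProj X p A else 0 := by
    ext f ε
    rw [mul_apply_eq_comp, walshProj_apply, walshProj_apply, coeff_walsh_smul]
    by_cases h : A = B
    · simp [h, walshProj_apply]
    · simp [h, Ne.symm h]
  refine ⟨⟨fun A => (hmul A A).trans (if_pos rfl), fun A B h => (hmul A B).trans (if_neg h)⟩, ?_⟩
  ext f ε
  simp [walshProj_apply, sum_walsh_smul_coeff]

/-- The functional calculus `m ↦ ∑ i, m i • E i` of a complete system of orthogonal idempotents. -/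
def idempotentMultiplier {ι R B : Type*} [Fintype ι] [CommSemiring R] [Ring B] [Algebra R B]
    {E : ι → B} (hE : CompleteOrthogonalIdempotents E) : (ι → R) →ₐ[R] B :=
  AlgHom.ofLinearMap (Fintype.linearCombination R E)
    (by simp [Fintype.linearCombination_apply, hE.complete])
    (by
      classical
      intro a b
      simp only [Fintype.linearCombination_apply, Finset.sum_mul_sum, smul_mul_smul_comm,
        hE.mul_eq, smul_ite, smul_zero, Finset.sum_ite_eq, Finset.mem_univ, if_true, Pi.mul_apply])

variable (X p) in
/-- The Walsh multiplier `f ↦ ∑_A m(A) f̂(A) w_A` with symbol `m`. -/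
def walshMultiplier : (Finset (Fin n) → ℂ) →ₐ[ℂ]
    (PiLp p (fun _ : Fin n → Bool => X) →L[ℂ] PiLp p fun _ : Fin n → Bool => X) :=
  idempotentMultiplier completeOrthogonalIdempotents_walshProj

lemma walshMultiplier_apply (m : Finset (Fin n) → ℂ) (f : PiLp p fun _ : Fin n → Bool => X) :
    walshMultiplier X p m f = ∑ A, m A • walshProj X p A f := by
  simp [walshMultiplier, idempotentMultiplier, Fintype.linearCombination_apply]

lemma walsh_update_not (i : Fin n) (A : Finset (Fin n)) (ε : Fin n → Bool) :
    walsh A (Function.update ε i (!ε i)) = (if i ∈ A then -1 else 1) * walsh A ε := by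
  have hsgn (j : Fin n) : sgn (Function.update ε i (!ε i) j)
      = (if i = j then -1 else 1) * sgn (ε j) := by
    by_cases h : i = j
    · subst h
      cases ε i <;> simp [sgn]
    · simp [h, Function.update_of_ne (Ne.symm h)]
  simp only [walsh, hsgn, Finset.prod_mul_distrib, Finset.prod_ite_eq]

/-- The symbol of the conditional expectation that averages over the coordinates in `A`. -/
def averagingSymbol (A B : Finset (Fin n)) : ℂ := if Disjoint A B then 1 else 0

lemma averagingSymbol_union (A B : Finset (Fin n)) :
    averagingSymbol (A ∪ B) = averagingSymbol A * averagingSymbol B := by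
  funext C
  simp only [averagingSymbol, Pi.mul_apply, Finset.disjoint_union_left, ite_and, mul_ite, mul_one,
    mul_zero]
  split_ifs <;> rfl

lemma averagingSymbol_empty : averagingSymbol (∅ : Finset (Fin n)) = 1 := by
  funext B
  simp [averagingSymbol]

lemma averagingSymbol_biUnion {ι : Type*} (a : ι → Finset (Fin n)) (T : Finset ι) :
    averagingSymbol (T.biUnion a) = ∏ j ∈ T, averagingSymbol (a j) := by
  classical
  induction T using Finset.induction_on with
  | empty => exact averagingSymbol_empty
  | insert i T hi ih =>
    rw [Finset.biUnion_insert, averagingSymbol_union, ih, Finset.prod_insert hi]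

-- Averaging over the coordinate `i` is `(1 + σ) / 2` for the isometry `σ` flipping that coordinate.
lemma norm_walshMultiplier_averagingSymbol_singleton_le (i : Fin n) :
    ‖walshMultiplier X p (averagingSymbol {i})‖ ≤ 1 := by
  let flip : (Fin n → Bool) ≃ (Fin n → Bool) :=
    Function.Involutive.toPerm (fun ε => Function.update ε i (!ε i)) fun ε => by simp
  let σ := LinearIsometryEquiv.piLpCongrLeft p ℂ X flip
  have hσ (f : PiLp p fun _ : Fin n → Bool => X) (ε) :
      σ f ε = f (Function.update ε i (!ε i)) := rfl
  refine ContinuousLinearMap.opNorm_le_bound _ zero_le_one fun f => ?_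
  have havg : walshMultiplier X p (averagingSymbol {i}) f = (2 : ℝ)⁻¹ • (f + σ f) := by
    refine PiLp.ext fun ε => ?_
    rw [walshMultiplier_apply, PiLp.smul_apply, PiLp.add_apply, hσ,
      ← sum_walsh_smul_coeff f.ofLp ε, ← sum_walsh_smul_coeff f.ofLp (Function.update ε i _),
      ← Finset.sum_add_distrib, Finset.smul_sum, WithLp.ofLp_sum, Finset.sum_apply]
    refine Finset.sum_congr rfl fun A _ => ?_
    rw [walsh_update_not, walshProj_apply, PiLp.smul_apply, ← add_smul, smul_smul]
    by_cases h : i ∈ A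
    · simp [averagingSymbol, h]
    · simp [averagingSymbol, h, ← two_mul]
  rw [havg, norm_smul, one_mul, norm_inv, Real.norm_ofNat, inv_mul_le_iff₀ two_pos, two_mul]
  exact (norm_add_le _ _).trans_eq (by rw [σ.norm_map])

lemma norm_walshMultiplier_averagingSymbol_le (A : Finset (Fin n)) :
    ‖walshMultiplier X p (averagingSymbol A)‖ ≤ 1 := by
  induction A using Finset.induction_on with
  | empty =>
    rw [averagingSymbol_empty, map_one]
    exact ContinuousLinearMap.norm_id_le
  | insert i A _ ih =>
    rw [Finset.insert_eq, averagingSymbol_union, map_mul]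
    exact (norm_mul_le _ _).trans (mul_le_one₀
      (norm_walshMultiplier_averagingSymbol_singleton_le i) (norm_nonneg _) ih)

lemma exists_exp_card_eq_sum_averagingSymbol {t : ℝ} (ht : 0 ≤ t) :
    ∃ w ∈ stdSimplex ℝ (Finset (Fin n)),
      (fun B : Finset (Fin n) => Complex.exp (-(t * (B.card : ℝ))))
        = ∑ A, (w A : ℂ) • averagingSymbol A := by
  set q := Real.exp (-t)
  have hq1 : q ≤ 1 := Real.exp_le_one_iff.2 (neg_nonpos.2 ht)
  have hbinom (s : Finset (Fin n)) :
      ∑ A ∈ s.powerset, (1 - q) ^ A.card * q ^ (s.card - A.card) = 1 := by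
    rw [Finset.sum_pow_mul_eq_add_pow, sub_add_cancel, one_pow]
  refine ⟨fun A => (1 - q) ^ A.card * q ^ (n - A.card), ⟨fun A => ?_, ?_⟩, ?_⟩
  · have := sub_nonneg.2 hq1
    positivity
  · simpa using hbinom Finset.univ
  funext B
  have hexp : Complex.exp (-(t * (B.card : ℝ))) = (q ^ B.card : ℝ) := by
    rw [← Real.exp_nat_mul]
    push_cast
    ring_nf
  have hsum : ∑ A, (if Disjoint A B then (1 - q) ^ A.card * q ^ (n - A.card) else 0)
      = q ^ B.card := by
    calc _ = ∑ A ∈ Bᶜ.powerset, q ^ B.card * ((1 - q) ^ A.card * q ^ (Bᶜ.card - A.card)) := by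
          rw [← Finset.sum_filter]
          refine Finset.sum_congr ?_ fun A hA => ?_
          · ext A
            simp [Finset.subset_compl_iff_disjoint_right]
          · have hcard := Finset.card_le_card (Finset.mem_powerset.1 hA)
            have hB := Finset.card_add_card_compl B
            rw [Fintype.card_fin] at hB
            rw [mul_left_comm, ← pow_add]
            congr 2
            omega
      _ = q ^ B.card := by rw [← Finset.mul_sum, hbinom, mul_one]
  rw [hexp, ← hsum, Finset.sum_apply, Complex.ofReal_sum]
  refine Finset.sum_congr rfl fun A _ => ?_
  by_cases h : Disjoint A B <;> simp [averagingSymbol, h]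

lemma norm_map_sum_smul_pow_le {κ A B : Type*} [Fintype κ] [CommRing A] [Algebra ℂ A]
    [NormedRing B] [NormedAlgebra ℂ B] (φ : A →ₐ[ℂ] B) {w : κ → ℝ} (hw : w ∈ stdSimplex ℝ κ)
    {x : κ → A} {N : ℕ} {C : ℝ} (hC : ∀ a : Fin N → κ, ‖φ (∏ j, x (a j))‖ ≤ C) :
    ‖φ (∑ k, (w k : ℂ) • x k) ^ N‖ ≤ C := by
  classical
  have hexpand : (∑ k, (w k : ℂ) • x k) ^ N
      = ∑ a : Fin N → κ, ((∏ j, w (a j) : ℝ) : ℂ) • ∏ j, x (a j) := by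
    simp only [Fintype.sum_pow, Finset.prod_smul, Complex.ofReal_prod]
  have hweights : ∑ a : Fin N → κ, ∏ j, w (a j) = 1 := by
    rw [← Fintype.sum_pow, hw.2, one_pow]
  rw [← map_pow, hexpand, map_sum, ← one_mul C, ← hweights, Finset.sum_mul]
  refine norm_sum_le_of_le _ fun a _ => ?_
  have hnonneg : 0 ≤ ∏ j, w (a j) := Finset.prod_nonneg fun j _ => hw.1 (a j)
  rw [map_smul, norm_smul, Complex.norm_of_nonneg hnonneg]
  exact mul_le_mul_of_nonneg_left (hC a) hnonneg

lemma BeckConvex.norm_walshMultiplier_prod_le {ι : Type*} [Fintype ι] [Nonempty ι] {δ : ℝ}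
    (h : BeckConvex (PiLp p fun _ : Fin n → Bool => X) ι δ) (a : ι → Finset (Fin n)) :
    ‖walshMultiplier X p (∏ j, (1 - averagingSymbol (a j)))‖ ≤ 2 ^ Fintype.card ι - δ := by
  classical
  let P (T : Finset ι) := walshMultiplier X p (averagingSymbol (T.biUnion a))
  have hexpand : walshMultiplier X p (∏ j, (1 - averagingSymbol (a j)))
      = ∑ T : Finset ι, ((-1) ^ T.card : ℤ) • P T := by
    rw [Finset.prod_sub, map_sum, Finset.powerset_univ]
    refine Finset.sum_congr rfl fun T _ => ?_
    rw [Finset.prod_const_one, mul_one, ← averagingSymbol_biUnion, ← map_zsmul, zsmul_eq_mul]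
    push_cast
    rfl
  have hnonneg : 0 ≤ 2 ^ Fintype.card ι - δ :=
    sub_nonneg.2 (h.le_one.trans (one_le_pow₀ one_le_two))
  refine ContinuousLinearMap.opNorm_le_bound _ hnonneg fun f => ?_
  have hP (T : Finset ι) (f) : ‖P T f‖ ≤ ‖f‖ :=
    ((P T).le_of_opNorm_le (norm_walshMultiplier_averagingSymbol_le _) f).trans_eq (one_mul _)
  have hmul (S T : Finset ι) (f) : P (S ∪ T) f = P S (P T f) := by
    simp only [P, Finset.union_biUnion, averagingSymbol_union, map_mul, mul_apply_eq_comp]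
  have halt : ‖∑ T, (-1 : ℤˣ) ^ T.card • P T f‖ ≤ (2 ^ Fintype.card ι - δ) * ‖f‖ :=
    norm_sum_alternating_le h (fun T => (P T).toLinearMap.toAddMonoidHom) hP hmul f
  rw [hexpand, sum_apply]
  simpa only [Units.smul_def, Units.val_pow_eq_pow_val, Units.val_neg, Units.val_one, smul_apply]
    using halt

lemma BeckConvex.beurlingCondition {ι : Type*} [Fintype ι] [Nonempty ι] {δ : ℝ}
    (h : BeckConvex (PiLp p fun _ : Fin n → Bool => X) ι δ) :
    BeurlingCondition (walshMultiplier X p (n := n)) (fun A => A.card) (Fintype.card ι) δ where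
  norm_le_one t ht := by
    obtain ⟨w, hw, hexp⟩ := exists_exp_card_eq_sum_averagingSymbol (n := n) ht
    rw [multiplierSemigroup, hexp, ← pow_one (walshMultiplier X p _)]
    refine norm_map_sum_smul_pow_le _ hw fun a => ?_
    rw [Fin.prod_univ_one]
    exact norm_walshMultiplier_averagingSymbol_le _
  norm_one_sub_pow_le t ht := by
    obtain ⟨w, hw, hexp⟩ := exists_exp_card_eq_sum_averagingSymbol (n := n) ht
    have hone : ∑ A, (w A : ℂ) • (1 - averagingSymbol A)
        = 1 - ∑ A, (w A : ℂ) • averagingSymbol A := by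
      simp only [smul_sub, Finset.sum_sub_distrib, ← Finset.sum_smul, ← Complex.ofReal_sum, hw.2,
        Complex.ofReal_one, one_smul]
    rw [multiplierSemigroup, hexp, ← map_one (walshMultiplier X p), ← map_sub, ← hone]
    refine norm_map_sum_smul_pow_le _ hw fun a => ?_
    rw [← (Fintype.equivFin ι).prod_comp]
    exact h.norm_walshMultiplier_prod_le _

end WalshMultipliers

section HeatSemigroup

variable {n d : ℕ} {p : ℝ≥0∞} [Fact (1 ≤ p)]

lemma lpNorm_eq_mul_norm_toLp {Y : Type*} [NormedAddCommGroup Y] (hp : 0 < p.toReal)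
    (f : (Fin n → Bool) → Y) :
    lpNorm p.toReal f = ((2 ^ n : ℝ)⁻¹) ^ (1 / p.toReal) * ‖WithLp.toLp p f‖ := by
  have hsum : ∑ ε, ‖f ε‖ ^ p.toReal = ‖WithLp.toLp p f‖ ^ p.toReal :=
    (norm_rpow_toReal_piLp hp (WithLp.toLp p f)).symm
  rw [lpNorm, hsum, Real.mul_rpow (by positivity) (by positivity),
    ← Real.rpow_mul (norm_nonneg _), mul_one_div_cancel hp.ne', Real.rpow_one]

variable {f : (Fin n → Bool) → X}

lemma toLp_heat (t : ℝ) :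
    WithLp.toLp p (heat t f) = multiplierSemigroup (walshMultiplier X p) (fun A => A.card) t
      (WithLp.toLp p f) := by
  refine PiLp.ext fun ε => ?_
  change heat t f ε = _
  rw [heat, multiplierSemigroup, walshMultiplier_apply, WithLp.ofLp_sum, Finset.sum_apply]
  refine Finset.sum_congr rfl fun A _ => ?_
  rw [walshProj_apply, ← Complex.coe_smul (Real.exp _)]
  push_cast
  rw [neg_mul]
  rfl

lemma multiplierSemigroup_apply_of_degLE (hf : degLE f d) (z : ℂ) :
    multiplierSemigroup (walshMultiplier X p) (fun A => A.card) z (WithLp.toLp p f)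
      = expSum d (fun k => ∑ A with A.card = k, walshProj X p A (WithLp.toLp p f)) z := by
  have hzero (A : Finset (Fin n)) (hA : d < A.card) : walshProj X p A (WithLp.toLp p f) = 0 := by
    rw [walshProj_apply, hf A hA]
    simp only [smul_zero]
    rfl
  rw [multiplierSemigroup, walshMultiplier_apply]
  calc ∑ A, Complex.exp (-(z * (A.card : ℝ))) • walshProj X p A (WithLp.toLp p f)
      = ∑ A with A.card ∈ Finset.range (d + 1),
          Complex.exp (-(z * (A.card : ℝ))) • walshProj X p A (WithLp.toLp p f) := by
        refine (Finset.sum_filter_of_ne fun A _ hA => ?_).symm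
        contrapose! hA
        rw [hzero A (by simpa using hA), smul_zero]
    _ = ∑ k ∈ Finset.range (d + 1), ∑ A with A.card = k,
          Complex.exp (-(z * (A.card : ℝ))) • walshProj X p A (WithLp.toLp p f) :=
        (Finset.sum_fiberwise_eq_sum_filter _ _ _ _).symm
    _ = _ := by
        refine Finset.sum_congr rfl fun k _ => ?_
        rw [Finset.smul_sum]
        refine Finset.sum_congr rfl fun A hA => ?_
        rw [(Finset.mem_filter.1 hA).2, mul_comm z, Complex.ofReal_natCast]

theorem KConvex.exists_norm_multiplierSemigroup_le (hX : KConvex X) (hp : 1 < p.toReal) :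
    ∃ δ : ℝ, 0 < δ ∧ δ ≤ 1 ∧ ∀ n : ℕ, ∀ z ∈ discSector δ,
      ‖multiplierSemigroup (walshMultiplier X p (n := n)) (fun A => A.card) z‖ ≤ 2 := by
  obtain ⟨m, β, hβ, hconv⟩ := hX.exists_beckConvex
  obtain ⟨β', hβ', hconv'⟩ := hconv.exists_piLp hβ hp
  obtain ⟨δ, hδ, hδ1, h⟩ := BeurlingCondition.exists_discSector (Fintype.card (Fin m → Bool)) hβ'
  exact ⟨δ, hδ, hδ1, fun n => h _ _ _ _ (fun A => A.card.cast_nonneg)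
    (hconv' (Fin n → Bool)).beurlingCondition⟩

-- The holomorphic extension of `s ↦ e^{-(s+t)Δ} f` is an exponential sum bounded on a sector, and
-- `f` is its value at the point `s = -t` outside that sector.
lemma norm_toLp_le_of_degLE {δ : ℝ} (hδ : 0 < δ) (hδ1 : δ ≤ 1)
    (hT : ∀ z ∈ discSector δ,
      ‖multiplierSemigroup (walshMultiplier X p (n := n)) (fun A => A.card) z‖ ≤ 2)
    (hf : degLE f d) {t : ℝ} (ht : 0 ≤ t) :
    ‖WithLp.toLp p f‖ ≤ Real.exp ((1 + Real.pi / δ) / Real.sin (δ / 4) * d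
      * max t (t ^ (1 / (2 - δ / Real.pi)))) * (2 * ‖WithLp.toLp p (heat t f)‖) := by
  let F (k : ℕ) := ∑ A with A.card = k, walshProj X p A (WithLp.toLp p f)
  have hF (z : ℂ) : expSum d (fun k => Complex.exp (-(k * t)) • F k) z
      = multiplierSemigroup (walshMultiplier X p) (fun A => A.card) (z + t) (WithLp.toLp p f) := by
    rw [expSum_exp_smul, multiplierSemigroup_apply_of_degLE hf]
  have hbound : ∀ z ∈ discSector δ, ‖expSum d (fun k => Complex.exp (-(k * t)) • F k) z‖
      ≤ 2 * ‖WithLp.toLp p (heat t f)‖ := by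
    intro z hz
    rw [hF, multiplierSemigroup_add, mul_apply_eq_comp, ← toLp_heat]
    exact ContinuousLinearMap.le_of_opNorm_le _ (hT z hz) _
  have h := norm_expSum_neg_le hδ hδ1 hbound ht
  rwa [hF, neg_add_cancel, multiplierSemigroup_zero, one_apply_eq_self] at h

end HeatSemigroup

theorem stmt6_general {X : Type*} [NormedAddCommGroup X] [NormedSpace ℂ X]
    (hX : KConvex X) (p : ℝ) (hp : 1 < p) :
    ∃ c C : ℝ, 0 < c ∧ 0 < C ∧ ∃ η : ℝ, 1 / 2 < η ∧ η ≤ 1 ∧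
      ∀ n d : ℕ, ∀ f : (Fin n → Bool) → X, degLE f d → ∀ t : ℝ, 0 ≤ t →
        c * Real.exp (-(C * d * max t (t ^ η))) * lpNorm p f ≤
          lpNorm p (heat t f) := by
  lift p to ℝ≥0 using (zero_lt_one.trans hp).le
  have : Fact ((1 : ℝ≥0∞) ≤ p) := ⟨by exact_mod_cast hp.le⟩
  obtain ⟨δ, hδ, hδ1, hT⟩ := hX.exists_norm_multiplierSemigroup_le (p := p) hp
  have hπ : δ / Real.pi < 1 := (div_lt_one Real.pi_pos).2 (by linarith [Real.pi_gt_three])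
  have hπ0 : 0 < δ / Real.pi := by positivity
  have hsin : 0 < Real.sin (δ / 4) :=
    Real.sin_pos_of_pos_of_lt_pi (by positivity) (by linarith [Real.pi_gt_three])
  refine ⟨1 / 2, (1 + Real.pi / δ) / Real.sin (δ / 4), one_half_pos, by positivity,
    1 / (2 - δ / Real.pi), one_div_lt_one_div_of_lt (by linarith) (by linarith),
    (div_le_one (by linarith)).2 (by linarith), fun n d f hf t ht => ?_⟩
  have h := norm_toLp_le_of_degLE hδ hδ1 (hT n) hf ht
  have hlp (g : (Fin n → Bool) → X) := lpNorm_eq_mul_norm_toLp (p := p) (one_pos.trans hp) g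
  rw [ENNReal.coe_toReal] at hlp
  rw [hlp, hlp, Real.exp_neg, mul_left_comm]
  refine mul_le_mul_of_nonneg_left ?_ (by positivity)
  rw [mul_assoc, inv_mul_eq_div, one_div_mul_eq_div, div_div, div_le_iff₀ (by positivity)]
  linarith

/-- **Improved lower bound on the decay of the heat semigroup** for `K`-convex targets. -/
theorem stmt6 {X : Type*} [NormedAddCommGroup X] [NormedSpace ℂ X] [CompleteSpace X]
    (hX : KConvex X) (p : ℝ) (hp : 1 < p) :
    ∃ c C : ℝ, 0 < c ∧ 0 < C ∧ ∃ η : ℝ, 1 / 2 < η ∧ η ≤ 1 ∧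
      ∀ n d : ℕ, 1 ≤ d → d ≤ n → ∀ f : (Fin n → Bool) → X, degLE f d → ∀ t : ℝ, 0 ≤ t →
        c * Real.exp (-(C * d * max t (t ^ η))) * lpNorm p f ≤
          lpNorm p (heat t f) := by
  obtain ⟨c, C, hc, hC, η, hη, hη1, h⟩ := stmt6_general hX p hp
  exact ⟨c, C, hc, hC, η, hη, hη1, fun n d _ _ => h n d⟩

end HammingCube
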